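/- arXiv:1506.06819 — 4 statements merged into one kernel-verified Lean document; each statement's English description precedes it below -/
import Mathlib

section
/- Let G be a connected finite simple graph on n vertices with Laplacian matrix L(G). Then: (1) for every vertex i, the number of spanning trees τ(G) equals the determinant of the reduced Laplacian L̃ obtained from L(G) by deleting the i-th row and i-th column; and (2) the product of the nonzero eigenvalues of L(G), counted with algebraic multiplicity, equals n·τ(G). -/
open Matrix

/-- `T` is (the edge set of) a spanning tree of `G`: `T ⊆ E(G)` and the graph `(V, T)`
is connected and acyclic. -/
def IsSpanningTree {V : Type*} (G : SimpleGraph V) (T : Set (Sym2 V)) : Prop :=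
  T ⊆ G.edgeSet ∧ (SimpleGraph.fromEdgeSet T).Connected ∧ (SimpleGraph.fromEdgeSet T).IsAcyclic

/-- The number of spanning trees of `G`. -/
noncomputable def treeCount {V : Type*} (G : SimpleGraph V) : ℕ :=
  Nat.card {T : Set (Sym2 V) // IsSpanningTree G T}

/-!
Orient every edge of `G` and let `D` be the resulting signed incidence matrix, so that `D Dᵀ = L`.
By the Cauchy–Binet formula, the determinant of the Laplacian without row and column `v` is the sum,
over the sets `S` of `n - 1` edges, of the squared determinant of the square submatrix of `D` with
columns `S` and rows `u ≠ v`. If `S` is a spanning tree, the path from `u` to `v` in `S` writes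
`e_u - e_v` as an integral combination of the columns in `S`, so the submatrix is invertible over
`ℤ` and its squared determinant is `1`. Otherwise `S` is disconnected, the indicator function of
the vertices not joined to `v` is orthogonal to all columns in `S`, and the determinant is `0`.

For the eigenvalues, `0` is a root of the characteristic polynomial, and up to sign the coefficient
of `X` is both the product of the other roots and the sum of the `n` reduced determinants.
-/

section Determinants

variable {R m n : Type*} [CommRing R] [Fintype m] [DecidableEq m]

lemma det_submatrix_transpose_mul_self {ι : Type*} [Fintype ι] [DecidableEq ι]
    (A : Matrix m n R) (c : ι → n) (f : m ≃ ι) :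
    ((Aᵀ * A).submatrix c c).det = (A.submatrix id (c ∘ f)).det ^ 2 := by
  rw [← det_submatrix_equiv_self f, sq]
  nth_rewrite 1 [← det_transpose (A.submatrix id (c ∘ f))]
  rw [← det_mul]
  rfl

lemma isUnit_det_of_span_col_eq_top {A : Matrix m m R}
    (hA : Submodule.span R (Set.range A.col) = ⊤) : IsUnit A.det := by
  rw [← isUnit_iff_isUnit_det, ← mulVec_surjective_iff_isUnit, ← coe_mulVecLin,
    ← LinearMap.range_eq_top, range_mulVecLin, hA]

variable [Fintype n] [DecidableEq n]

-- Cauchy–Binet: both sides are the coefficient of `X ^ |m|` in `det (1 + X A B) = det (1 + X B A)`.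
lemma det_mul_eq_sum_minors_mul_comm (A : Matrix m n R) (B : Matrix n m R) :
    (A * B).det = ∑ s ∈ (Finset.univ : Finset n).powersetCard (Fintype.card m),
      ((B * A).submatrix (Subtype.val : s → n) Subtype.val).det := by
  have det_eq_coeff : (A * B).det =
      (det (1 + (Polynomial.X : Polynomial R) • (A * B).map Polynomial.C)).coeff
        (Fintype.card m) := by
    rw [coeff_det_one_add_X_smul_eq_sum_minors, ← Finset.card_univ, Finset.powersetCard_self,
      Finset.sum_singleton]
    exact (det_submatrix_equiv_self (Equiv.subtypeUnivEquiv Finset.mem_univ) (A * B)).symm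
  rw [det_eq_coeff, ← coeff_det_one_add_X_smul_eq_sum_minors, Matrix.map_mul, Matrix.map_mul,
    ← Matrix.smul_mul, det_one_add_mul_comm, Matrix.mul_smul]

lemma charpoly_coeff_one_eq_sum_minors [Nonempty n] (M : Matrix n n R) :
    M.charpoly.coeff 1 = (-1) ^ (Fintype.card n - 1) *
      ∑ i, (M.submatrix (Subtype.val : {j // j ≠ i} → n) Subtype.val).det := by
  have card_pos : 0 < Fintype.card n := Fintype.card_pos
  have coeff_eq := M.charpoly_coeff_eq_sum_minors (Fintype.card n - 1) (by omega)
  rw [Nat.sub_sub_self card_pos] at coeff_eq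
  rw [coeff_eq]
  congr 1
  symm
  refine Finset.sum_nbij (fun i ↦ {i}ᶜ) (fun i _ ↦ ?_)
    (compl_injective.comp Finset.singleton_injective).injOn (fun s hs ↦ ?_) (fun i _ ↦ ?_)
  · simp [Finset.mem_powersetCard, Finset.card_compl]
  · have card_compl : sᶜ.card = 1 := by
      rw [Finset.card_compl, (Finset.mem_powersetCard.1 hs).2, Nat.sub_sub_self card_pos]
    obtain ⟨i, hi⟩ := Finset.card_eq_one.1 card_compl
    exact ⟨i, Finset.mem_coe.2 (Finset.mem_univ i), compl_eq_comm.1 hi⟩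
  · exact (det_submatrix_equiv_self (Equiv.subtypeEquivRight fun j ↦ by simp)
      (M.submatrix (Subtype.val : {j // j ≠ i} → n) Subtype.val)).symm

end Determinants

section NonzeroRoots

variable {K : Type*} [Field K] [DecidableEq K]

open Polynomial in
lemma prod_nonzero_roots_of_coeff_zero_eq_zero {p : K[X]} (hp : p.Splits) (hmonic : p.Monic)
    (h0 : p.coeff 0 = 0) (h1 : p.coeff 1 ≠ 0) :
    (p.roots.filter (· ≠ 0)).prod = (-1) ^ (p.natDegree - 1) * p.coeff 1 := by
  obtain ⟨q, rfl⟩ := X_dvd_iff.2 h0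
  rw [coeff_X_mul] at h1 ⊢
  have hq : q.Monic := monic_X.of_mul_monic_left hmonic
  have roots_ne_zero : ∀ a ∈ q.roots, a ≠ 0 := by
    rintro a ha rfl
    exact h1 (coeff_zero_eq_eval_zero q ▸ (mem_roots'.1 ha).2)
  rw [roots_mul hmonic.ne_zero, roots_X, Multiset.singleton_add,
    Multiset.filter_cons_of_neg _ (by simp), Multiset.filter_eq_self.2 roots_ne_zero,
    natDegree_X_mul hq.ne_zero, Nat.add_sub_cancel,
    (splits_X_mul.1 hp).coeff_zero_eq_prod_roots_of_monic hq, ← mul_assoc, ← mul_pow]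
  simp

lemma prod_nonzero_roots_charpoly_of_det_eq_zero {n : Type*} [Fintype n] [DecidableEq n]
    {M : Matrix n n K} (hM : M.charpoly.Splits) (hdet : M.det = 0)
    (hminors : ∑ i, (M.submatrix (Subtype.val : {j // j ≠ i} → n) Subtype.val).det ≠ 0) :
    (M.charpoly.roots.filter (· ≠ 0)).prod =
      ∑ i, (M.submatrix (Subtype.val : {j // j ≠ i} → n) Subtype.val).det := by
  obtain ⟨i, -, -⟩ := Finset.exists_ne_zero_of_sum_ne_zero hminors
  have : Nonempty n := ⟨i⟩
  have coeff_zero : M.charpoly.coeff 0 = 0 := by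
    simpa [hdet] using M.det_eq_sign_charpoly_coeff.symm
  have coeff_one := charpoly_coeff_one_eq_sum_minors M
  rw [prod_nonzero_roots_of_coeff_zero_eq_zero hM M.charpoly_monic coeff_zero
    (by simpa [coeff_one] using hminors), coeff_one, M.charpoly_natDegree_eq_dim, ← mul_assoc,
    ← mul_pow]
  simp

end NonzeroRoots

section IncidenceMatrix

variable {V : Type*} [DecidableEq V] (R : Type*) [CommRing R] (G : SimpleGraph V)
  [DecidableRel G.Adj]

/-- The signed incidence matrix of `G`, for the orientation of each edge `e` from `e.out.1` to
`e.out.2`; its product with its transpose is the Laplacian. As in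
`SimpleGraph.incMatrix`, the columns are indexed by all of `Sym2 V`, those of non-edges being
zero. -/
noncomputable def signedIncMatrix : Matrix V (Sym2 V) R :=
  .of fun u e ↦ if e ∈ G.edgeSet then (Pi.single e.out.1 1 - Pi.single e.out.2 1 : V → R) u else 0

variable {G}

lemma signedIncMatrix_apply_of_notMem {e : Sym2 V} (he : e ∉ G.edgeSet) (u : V) :
    signedIncMatrix R G u e = 0 :=
  if_neg he

lemma signedIncMatrix_col_eq_or_eq_neg {x y : V} (h : G.Adj x y) :
    (signedIncMatrix R G).col s(x, y) = Pi.single x 1 - Pi.single y 1 ∨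
      (signedIncMatrix R G).col s(x, y) = -(Pi.single x 1 - Pi.single y 1) := by
  have col_eq : (signedIncMatrix R G).col s(x, y) =
      Pi.single s(x, y).out.1 1 - Pi.single s(x, y).out.2 1 :=
    funext fun u ↦ if_pos h
  have out_eq : s(s(x, y).out.1, s(x, y).out.2) = s(x, y) := Quot.out_eq _
  rw [col_eq]
  rcases Sym2.eq_iff.1 out_eq with ⟨h₁, h₂⟩ | ⟨h₁, h₂⟩ <;> rw [h₁, h₂]
  · exact .inl rfl
  · exact .inr (neg_sub _ _).symm

variable (G) in
lemma signedIncMatrix_apply_mul_apply (a b : V) (e : Sym2 V) :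
    signedIncMatrix R G a e * signedIncMatrix R G b e =
      (if a = b then 1 else -1) * (G.incMatrix R a e * G.incMatrix R b e) := by
  by_cases he : e ∈ G.edgeSet
  · induction e with | _ x y
    have hne : x ≠ y := G.ne_of_adj he
    have entries_mul : signedIncMatrix R G a s(x, y) * signedIncMatrix R G b s(x, y) =
        (Pi.single x 1 - Pi.single y 1 : V → R) a * (Pi.single x 1 - Pi.single y 1 : V → R) b := by
      change (signedIncMatrix R G).col s(x, y) a * (signedIncMatrix R G).col s(x, y) b = _
      rcases signedIncMatrix_col_eq_or_eq_neg R he with h | h <;>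
        simp only [h, Pi.neg_apply, neg_mul_neg]
    rw [entries_mul]
    simp only [SimpleGraph.incMatrix_apply', SimpleGraph.incidenceSet, Set.mem_ofPred_eq, he,
      true_and, Sym2.mem_iff, Pi.sub_apply, Pi.single_apply]
    grind
  · simp [signedIncMatrix_apply_of_notMem R he, SimpleGraph.incMatrix_apply',
      SimpleGraph.incidenceSet, he]

lemma signedIncMatrix_mul_transpose [Fintype V] :
    signedIncMatrix R G * (signedIncMatrix R G)ᵀ = G.lapMatrix R := by
  ext a b
  have entry_eq : (signedIncMatrix R G * (signedIncMatrix R G)ᵀ) a b =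
      (if a = b then 1 else -1) * (G.incMatrix R * (G.incMatrix R)ᵀ) a b := by
    simp only [mul_apply, transpose_apply, signedIncMatrix_apply_mul_apply, Finset.mul_sum]
  rw [entry_eq, SimpleGraph.incMatrix_mul_transpose]
  by_cases hab : a = b <;> by_cases hadj : G.Adj a b <;>
    simp [SimpleGraph.lapMatrix, SimpleGraph.degMatrix, hab, hadj]

lemma vecMul_signedIncMatrix_eq_zero [Fintype V] {x y : V} (h : G.Adj x y) {g : V → R}
    (hg : g x = g y) : (g ᵥ* signedIncMatrix R G) s(x, y) = 0 := by
  change g ⬝ᵥ (signedIncMatrix R G).col s(x, y) = 0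
  rcases signedIncMatrix_col_eq_or_eq_neg R h with h | h <;> simp [h, dotProduct_sub, hg]

lemma single_sub_single_mem_span_col {S : Set (Sym2 V)} (hS : S ⊆ G.edgeSet) {u v : V}
    (huv : (SimpleGraph.fromEdgeSet S).Reachable u v) :
    (Pi.single u 1 - Pi.single v 1 : V → R) ∈
      Submodule.span R ((signedIncMatrix R G).col '' S) := by
  obtain ⟨w⟩ := huv
  induction w with
  | nil => simp
  | @cons a b c hab _ ih =>
    have hmem := Submodule.subset_span (R := R)
      (Set.mem_image_of_mem (signedIncMatrix R G).col hab.1)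
    rw [← sub_add_sub_cancel _ (Pi.single b 1)]
    refine add_mem ?_ ih
    rcases signedIncMatrix_col_eq_or_eq_neg R (hS hab.1) with h | h
    · rwa [h] at hmem
    · rw [h] at hmem
      exact neg_mem_iff.1 hmem

end IncidenceMatrix

section ReducedMinors

variable {V : Type*} [Fintype V] [DecidableEq V] (R : Type*) [CommRing R] {G : SimpleGraph V}
  [DecidableRel G.Adj] {v : V} {S : Finset (Sym2 V)}

lemma isUnit_det_signedIncMatrix_submatrix (hS : (S : Set (Sym2 V)) ⊆ G.edgeSet)
    (hconn : (SimpleGraph.fromEdgeSet (S : Set (Sym2 V))).Connected) (f : {u // u ≠ v} ≃ S) :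
    IsUnit ((signedIncMatrix R G).submatrix Subtype.val (Subtype.val ∘ f)).det := by
  apply isUnit_det_of_span_col_eq_top
  let restrict : (V → R) →ₗ[R] ({u // u ≠ v} → R) := LinearMap.funLeft R R Subtype.val
  have range_col : Set.range ((signedIncMatrix R G).submatrix Subtype.val (Subtype.val ∘ f)).col =
      restrict '' ((signedIncMatrix R G).col '' S) := by
    rw [← Set.image_comp, ← Subtype.range_coe (s := (S : Set (Sym2 V))), ← Set.range_comp]
    exact f.surjective.range_comp (fun e : S ↦ restrict ((signedIncMatrix R G).col e))
  rw [range_col, ← Submodule.map_span, eq_top_iff, ← (Pi.basisFun R _).span_eq, Submodule.span_le]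
  rintro _ ⟨u, rfl⟩
  refine ⟨_, single_sub_single_mem_span_col R hS (hconn.preconnected u v), ?_⟩
  ext x
  simp [restrict, LinearMap.funLeft_apply, Pi.single_apply, x.2, Subtype.ext_iff]

variable [IsDomain R]

lemma det_signedIncMatrix_submatrix_eq_zero (hS : (S : Set (Sym2 V)) ⊆ G.edgeSet)
    (hconn : ¬(SimpleGraph.fromEdgeSet (S : Set (Sym2 V))).Connected) (f : {u // u ≠ v} ≃ S) :
    ((signedIncMatrix R G).submatrix Subtype.val (Subtype.val ∘ f)).det = 0 := by
  classical
  set H := SimpleGraph.fromEdgeSet (S : Set (Sym2 V))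
  obtain ⟨u, hu⟩ : ∃ u, ¬H.Reachable u v := by
    by_contra! hreach
    have : Nonempty V := ⟨v⟩
    exact hconn ⟨fun a b ↦ (hreach a).trans (hreach b).symm⟩
  let g : V → R := fun x ↦ if H.Reachable x v then 0 else 1
  have hgv : g v = 0 := if_pos .rfl
  have hgu : g u = 1 := if_neg hu
  have huv : u ≠ v := by rintro rfl; exact hu .rfl
  refine exists_vecMul_eq_zero_iff.1 ⟨fun x ↦ g x, fun hzero ↦ ?_, funext fun y ↦ ?_⟩
  · exact one_ne_zero (hgu.symm.trans (congrFun hzero ⟨u, huv⟩))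
  have sum_eq_vecMul : ∑ x : {u // u ≠ v}, g x * signedIncMatrix R G x (f y) =
      (g ᵥ* signedIncMatrix R G) (f y) := by
    rw [vecMul, dotProduct, Fintype.sum_eq_add_sum_subtype_ne _ v, hgv, zero_mul, zero_add]
  refine sum_eq_vecMul.trans ?_
  obtain ⟨e, he⟩ := f y
  induction e with | _ a b
  have hab : H.Adj a b := (SimpleGraph.fromEdgeSet_adj _).2 ⟨he, G.ne_of_adj (hS he)⟩
  have reachable_iff : H.Reachable a v ↔ H.Reachable b v :=
    ⟨hab.symm.reachable.trans, hab.reachable.trans⟩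
  exact vecMul_signedIncMatrix_eq_zero R (hS he) (by simp only [g, reachable_iff])

end ReducedMinors

section SpanningTrees

variable {V : Type*} {G : SimpleGraph V}

lemma isSpanningTree_iff_connected_and_card [Fintype V] {S : Finset (Sym2 V)}
    (hS : (S : Set (Sym2 V)) ⊆ G.edgeSet) :
    IsSpanningTree G S ↔ (SimpleGraph.fromEdgeSet (S : Set (Sym2 V))).Connected ∧
      S.card + 1 = Fintype.card V := by
  have edgeSet_eq : (SimpleGraph.fromEdgeSet (S : Set (Sym2 V))).edgeSet = S := by
    rw [SimpleGraph.edgeSet_fromEdgeSet, sdiff_eq_left]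
    exact Set.disjoint_left.2 fun e he ↦ G.not_isDiag_of_mem_edgeSet (hS he)
  have isTree_iff := (SimpleGraph.fromEdgeSet (S : Set (Sym2 V))).isTree_iff_connected_and_card
  simp only [edgeSet_eq, Nat.card_eq_fintype_card, Finset.coe_sort_coe, Fintype.card_coe]
    at isTree_iff
  rw [← isTree_iff, SimpleGraph.isTree_iff]
  exact and_iff_right hS

lemma treeCount_pos [Finite V] (hG : G.Connected) : 0 < treeCount G := by
  obtain ⟨T, hTG, hT⟩ := hG.exists_isTree_le
  have hTree : IsSpanningTree G T.edgeSet :=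
    ⟨SimpleGraph.edgeSet_mono hTG, by
      simpa only [SimpleGraph.fromEdgeSet_edgeSet] using ⟨hT.connected, hT.isAcyclic⟩⟩
  exact Nat.card_pos_iff.2 ⟨⟨_, hTree⟩, inferInstance⟩

variable [Fintype V] [DecidableEq V]

lemma card_subtype_ne_add_one (v : V) : Fintype.card {u // u ≠ v} + 1 = Fintype.card V := by
  rw [Fintype.card_subtype_compl, Fintype.card_subtype_eq]
  exact Nat.sub_add_cancel (Fintype.card_pos_iff.2 ⟨v⟩)

open Classical in
variable (G) in
lemma treeCount_eq_card_filter_powersetCard (v : V) :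
    treeCount G = (((Finset.univ : Finset (Sym2 V)).powersetCard
      (Fintype.card {u // u ≠ v})).filter fun S : Finset (Sym2 V) ↦ IsSpanningTree G S).card := by
  have filter_univ : (((Finset.univ : Finset (Sym2 V)).powersetCard
      (Fintype.card {u // u ≠ v})).filter fun S : Finset (Sym2 V) ↦ IsSpanningTree G S) =
      Finset.univ.filter fun S : Finset (Sym2 V) ↦ IsSpanningTree G S := by
    ext S
    simp only [Finset.mem_filter, Finset.mem_powersetCard, Finset.subset_univ, Finset.mem_univ,
      true_and, and_iff_right_iff_imp]
    intro hS
    have card_add_one := ((isSpanningTree_iff_connected_and_card hS.1).1 hS).2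
    exact Nat.add_right_cancel (card_add_one.trans (card_subtype_ne_add_one v).symm)
  rw [filter_univ, ← Fintype.card_subtype, ← Nat.card_eq_fintype_card]
  exact (Nat.card_congr (Fintype.finsetEquivSet.subtypeEquiv fun _ ↦ Iff.rfl)).symm

variable [DecidableRel G.Adj]

open Classical in
lemma sq_det_signedIncMatrix_submatrix {v : V} {S : Finset (Sym2 V)} (f : {u // u ≠ v} ≃ S) :
    ((signedIncMatrix ℤ G).submatrix Subtype.val (Subtype.val ∘ f)).det ^ 2 =
      if IsSpanningTree G S then 1 else 0 := by
  have hcard : S.card + 1 = Fintype.card V := by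
    rw [← Fintype.card_coe, ← Fintype.card_congr f, card_subtype_ne_add_one]
  by_cases hS : (S : Set (Sym2 V)) ⊆ G.edgeSet
  · simp only [isSpanningTree_iff_connected_and_card hS, hcard, and_true]
    split_ifs with hconn
    · exact Int.isUnit_sq (isUnit_det_signedIncMatrix_submatrix ℤ hS hconn f)
    · rw [det_signedIncMatrix_submatrix_eq_zero ℤ hS hconn f, zero_pow two_ne_zero]
  · obtain ⟨e, heS, heG⟩ := Set.not_subset.1 hS
    rw [if_neg fun h ↦ hS h.1, det_eq_zero_of_column_eq_zero (f.symm ⟨e, heS⟩) fun u ↦ ?_,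
      zero_pow two_ne_zero]
    simpa using signedIncMatrix_apply_of_notMem ℤ heG u

end SpanningTrees

section Laplacian

variable {V : Type*} [Fintype V] [DecidableEq V] (R : Type*) [CommRing R] (G : SimpleGraph V)
  [DecidableRel G.Adj]

lemma lapMatrix_eq_map_intCast : G.lapMatrix R = (G.lapMatrix ℤ).map (Int.castRingHom R) := by
  ext a b
  by_cases hab : a = b <;> by_cases hadj : G.Adj a b <;>
    simp [SimpleGraph.lapMatrix, SimpleGraph.degMatrix, hab, hadj]

lemma det_lapMatrix_eq_zero [IsDomain R] [Nonempty V] : (G.lapMatrix R).det = 0 :=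
  exists_mulVec_eq_zero_iff.1
    ⟨fun _ ↦ 1, Function.const_ne_zero.2 one_ne_zero, G.lapMatrix_mulVec_const_eq_zero⟩

lemma treeCount_eq_det_reduced_lapMatrix_int (v : V) :
    (treeCount G : ℤ) =
      ((G.lapMatrix ℤ).submatrix (Subtype.val : {u // u ≠ v} → V) Subtype.val).det := by
  classical
  let D := (signedIncMatrix ℤ G).submatrix (Subtype.val : {u // u ≠ v} → V) id
  have factorization :
      (G.lapMatrix ℤ).submatrix (Subtype.val : {u // u ≠ v} → V) Subtype.val = D * Dᵀ := by
    rw [← signedIncMatrix_mul_transpose]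
    rfl
  have minor_eq : ∀ S ∈ (Finset.univ : Finset (Sym2 V)).powersetCard (Fintype.card {u // u ≠ v}),
      ((Dᵀ * D).submatrix (Subtype.val : S → Sym2 V) Subtype.val).det =
        if IsSpanningTree G S then 1 else 0 := by
    intro S hS
    let f : {u // u ≠ v} ≃ S :=
      Fintype.equivOfCardEq (by rw [Fintype.card_coe, (Finset.mem_powersetCard.1 hS).2])
    rw [det_submatrix_transpose_mul_self D _ f]
    exact sq_det_signedIncMatrix_submatrix f
  rw [factorization, det_mul_eq_sum_minors_mul_comm, Finset.sum_congr rfl minor_eq,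
    Finset.sum_boole, treeCount_eq_card_filter_powersetCard G v]

lemma treeCount_eq_det_reduced_lapMatrix (v : V) :
    (treeCount G : R) =
      ((G.lapMatrix R).submatrix (Subtype.val : {u // u ≠ v} → V) Subtype.val).det := by
  rw [lapMatrix_eq_map_intCast, submatrix_map, ← RingHom.mapMatrix_apply, ← RingHom.map_det,
    ← treeCount_eq_det_reduced_lapMatrix_int, map_natCast]

variable {G}

lemma prod_nonzero_roots_charpoly_lapMatrix {K : Type*} [Field K] [CharZero K] [DecidableEq K]
    (hG : G.Connected) (hsplits : (G.lapMatrix K).charpoly.Splits) :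
    ((G.lapMatrix K).charpoly.roots.filter (· ≠ 0)).prod =
      (Fintype.card V : K) * (treeCount G : K) := by
  have := hG.nonempty
  have sum_minors : ∑ v, ((G.lapMatrix K).submatrix
      (Subtype.val : {u // u ≠ v} → V) Subtype.val).det = Fintype.card V * treeCount G := by
    simp [← treeCount_eq_det_reduced_lapMatrix]
  rw [← sum_minors]
  refine prod_nonzero_roots_charpoly_of_det_eq_zero hsplits (det_lapMatrix_eq_zero K G) ?_
  rw [sum_minors]
  exact mul_ne_zero (Nat.cast_ne_zero.2 Fintype.card_ne_zero)
    (Nat.cast_ne_zero.2 (treeCount_pos hG).ne')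

end Laplacian

theorem matrix_tree_theorem_general {V : Type*} [Fintype V] [DecidableEq V]
    (G : SimpleGraph V) [DecidableRel G.Adj]
    (R K : Type*) [CommRing R] [Field K] [CharZero K] [DecidableEq K] :
    (∀ v : V,
      (treeCount G : R) =
        ((G.lapMatrix R).submatrix (Subtype.val : {u : V // u ≠ v} → V) Subtype.val).det) ∧
    (G.Connected → (G.lapMatrix K).charpoly.Splits →
      ((G.lapMatrix K).charpoly.roots.filter (· ≠ 0)).prod =
        (Fintype.card V : K) * (treeCount G : K)) :=
  ⟨treeCount_eq_det_reduced_lapMatrix R G, prod_nonzero_roots_charpoly_lapMatrix⟩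

/-- **The Matrix-Tree Theorem.**  For a connected graph `G` on `n` vertices:
(1) `τ(G)` equals the determinant of the reduced Laplacian obtained by deleting the row and
column of any vertex `v`; and (2) the product of the nonzero eigenvalues of the Laplacian,
with algebraic multiplicity, equals `n · τ(G)`. -/
theorem matrix_tree_theorem {V : Type*} [Fintype V] [DecidableEq V]
    (G : SimpleGraph V) [DecidableRel G.Adj] (hG : G.Connected) :
    (∀ v : V,
      (treeCount G : ℤ) =
        ((SimpleGraph.lapMatrix ℤ G).submatrix
          (Subtype.val : {u : V // u ≠ v} → V) Subtype.val).det) ∧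
    ((SimpleGraph.lapMatrix ℂ G).charpoly.roots.filter (· ≠ 0)).prod =
      (Fintype.card V : ℂ) * (treeCount G : ℂ) := by
  obtain ⟨reduced, eigenvalues⟩ := matrix_tree_theorem_general G ℤ ℂ
  exact ⟨reduced, eigenvalues hG (IsAlgClosed.splits _)⟩
end

section
/- Let G be a finite simple graph on n vertices with connected components G_1,…,G_c of orders n_1,…,n_c, and let τ(G) be the number of maximal spanning forests of G (sets of edges F such that (V,F) is acyclic and has exactly c connected components). Then: (1) the product of the nonzero eigenvalues of L(G), counted with algebraic multiplicity, equals n_1·n_2⋯n_c·τ(G); (2) for any choice of one vertex from each component, τ(G) = det(L_S), where L_S is the submatrix of L(G) obtained by deleting the c rows and columns corresponding to the chosen vertices; and (3) the number of rooted maximal spanning forests of G, i.e., pairs (F,ρ) where F is a maximal spanning forest and ρ is a choice of one vertex from each connected component of G, equals the product of the nonzero eigenvalues of L(G). -/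
open Matrix

/-- `T` is (the edge set of) a maximal spanning forest of `G`: `T ⊆ E(G)`, the graph
`(V, T)` is acyclic, and it has exactly as many connected components as `G`. -/
def IsMaxSpanningForest {V : Type*} (G : SimpleGraph V) (T : Set (Sym2 V)) : Prop :=
  T ⊆ G.edgeSet ∧ (SimpleGraph.fromEdgeSet T).IsAcyclic ∧
    Nat.card (SimpleGraph.fromEdgeSet T).ConnectedComponent = Nat.card G.ConnectedComponent

/-- The number of maximal spanning forests of `G`. -/
noncomputable def forestCount {V : Type*} (G : SimpleGraph V) : ℕ :=
  Nat.card {T : Set (Sym2 V) // IsMaxSpanningForest G T}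

/-!
Let `u ∈ s`, `v ∉ s` and let `uv` be a non-edge of `G`. Adding the edge `uv` changes the Laplacian
restricted to `s` only by adding `1` to its entry at `(u, u)`, so the principal minors satisfy
`det L(G + uv)_s = det L(G)_s + det L(G)_{s ∖ u}`. The forests in `G` with root set `sᶜ` obey the
same recursion: such a forest in `G + uv` either avoids `uv`, or contains it, and then deleting it
makes `u` an additional root. Hence each principal minor of the Laplacian counts the forests rooted
at the complement of its index set.

Let `c` be the number of components of `G`. With at most `c` roots there is such a forest only if
the roots form a transversal of the components, and then these forests are exactly the maximal
spanning forests. The coefficients of the characteristic polynomial are signed sums of principal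
minors, so those of degree less than `c` vanish, and the one of degree `c` is, up to sign, the
number of transversals times the number of maximal spanning forests. This trailing coefficient is,
up to the same sign, the product of the nonzero eigenvalues.
-/

section RootedForests

open SimpleGraph

variable {V : Type*} {G H : SimpleGraph V} {R : Set V} {u v x y : V}

lemma reachable_sup_edge_iff :
    (G ⊔ edge u v).Reachable x y ↔ G.Reachable x y ∨
      (G.Reachable x u ∧ G.Reachable v y) ∨ (G.Reachable x v ∧ G.Reachable u y) := by
  constructor
  · rintro ⟨p⟩
    induction p with
    | nil => exact .inl .rfl
    | cons hadj _ ih =>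
      rw [sup_adj, edge_adj] at hadj
      obtain hadj | ⟨⟨rfl, rfl⟩ | ⟨rfl, rfl⟩, -⟩ := hadj
      · exact ih.imp hadj.reachable.trans <| .imp (.imp_left hadj.reachable.trans)
          (.imp_left hadj.reachable.trans)
      · grind [Reachable.refl]
      · grind [Reachable.refl]
  · have huv : (G ⊔ edge u v).Reachable u v := by
      obtain rfl | hne := eq_or_ne u v
      · exact .rfl
      · exact Adj.reachable <| by simp [edge_adj, hne]
    have hmono {a b : V} (h : G.Reachable a b) : (G ⊔ edge u v).Reachable a b :=
      h.mono le_sup_left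
    rintro (h | ⟨hxu, hvy⟩ | ⟨hxv, huy⟩)
    · exact hmono h
    · exact (hmono hxu).trans <| huv.trans (hmono hvy)
    · exact (hmono hxv).trans <| huv.symm.trans (hmono huy)

/-- `R` is a transversal of the components of `G`, that is, a possible set of roots: it contains
exactly one vertex of each connected component. -/
def IsTransversal (G : SimpleGraph V) (R : Set V) : Prop :=
  ConnectedComponent.Represents R (Set.univ : Set G.ConnectedComponent)

lemma isTransversal_iff :
    IsTransversal G R ↔
      (∀ r ∈ R, ∀ r' ∈ R, G.Reachable r r' → r = r') ∧ ∀ x, ∃ r ∈ R, G.Reachable r x := by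
  simp only [IsTransversal, ConnectedComponent.Represents, Set.BijOn, Set.mapsTo_univ, true_and,
    Set.InjOn, Set.SurjOn, Set.univ_subset_iff, Set.eq_univ_iff_forall, ConnectedComponent.forall,
    Set.mem_image, ConnectedComponent.eq]

lemma isTransversal_insert_iff (hu : u ∉ R) (hv : v ∈ R) :
    IsTransversal G (insert u R) ↔ ¬G.Reachable u v ∧ IsTransversal (G ⊔ edge u v) R := by
  simp only [isTransversal_iff, reachable_sup_edge_iff]
  constructor
  · rintro ⟨hunique, hexists⟩
    have hroot {r : V} (hr : r ∈ R) : ¬G.Reachable r u := fun hru ↦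
      hu (hunique r (.inr hr) u (.inl rfl) hru ▸ hr)
    refine ⟨fun h ↦ hroot hv h.symm, ?_, fun x ↦ ?_⟩
    · rintro r hr r' hr' (h | ⟨h, -⟩ | ⟨-, h⟩)
      · exact hunique r (.inr hr) r' (.inr hr') h
      · exact absurd h (hroot hr)
      · exact absurd h.symm (hroot hr')
    · obtain ⟨r, rfl | hr, hrx⟩ := hexists x
      · exact ⟨v, hv, .inr <| .inr ⟨.rfl, hrx⟩⟩
      · exact ⟨r, hr, .inl hrx⟩
  · rintro ⟨huv, hunique, hexists⟩
    have hroot {r : V} (hr : r ∈ R) : ¬G.Reachable r u := fun hru ↦ by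
      obtain rfl := hunique r hr v hv <| .inr <| .inl ⟨hru, .rfl⟩
      exact huv hru.symm
    refine ⟨?_, fun x ↦ ?_⟩
    · rintro r (rfl | hr) r' (rfl | hr') h
      · rfl
      · exact absurd h.symm (hroot hr')
      · exact absurd h (hroot hr)
      · exact hunique r hr r' hr' (.inl h)
    · obtain ⟨r, hr, h | ⟨-, h⟩ | ⟨-, h⟩⟩ := hexists x
      · exact ⟨r, .inr hr, h⟩
      · exact ⟨v, .inr hv, h⟩
      · exact ⟨u, .inl rfl, h⟩

/-- `H` is a forest rooted at `R`: it is acyclic and each of its components, isolated vertices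
included, contains exactly one element of `R`. -/
def IsRootedForest (H : SimpleGraph V) (R : Set V) : Prop :=
  H.IsAcyclic ∧ IsTransversal H R

lemma isRootedForest_sup_edge_iff (hu : u ∉ R) (hv : v ∈ R) (huv : ¬H.Adj u v) :
    IsRootedForest (H ⊔ edge u v) R ↔ IsRootedForest H (insert u R) := by
  have hne : u ≠ v := fun h ↦ hu (h ▸ hv)
  simp only [IsRootedForest, isTransversal_insert_iff hu hv, isAcyclic_sup_fromEdgeSet_iff, hne,
    huv, or_false, imp_false, and_assoc]

lemma isRootedForest_univ_iff : IsRootedForest H Set.univ ↔ H = ⊥ := by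
  rw [IsRootedForest, isTransversal_iff]
  constructor
  · rintro ⟨-, hunique, -⟩
    rw [eq_bot_iff_forall_not_adj]
    exact fun a b hab ↦ hab.ne <| hunique a trivial b trivial hab.reachable
  · rintro rfl
    exact ⟨isAcyclic_bot, by simp [reachable_bot], fun x ↦ ⟨x, trivial, .rfl⟩⟩

lemma IsRootedForest.exists_adj (h : IsRootedForest H R) (hR : R ≠ Set.univ) :
    ∃ u ∉ R, ∃ v ∈ R, H.Adj u v := by
  obtain ⟨x, hx⟩ := (Set.ne_univ_iff_exists_notMem R).1 hR
  obtain ⟨r, hr, ⟨p⟩⟩ := (isTransversal_iff.1 h.2).2 x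
  obtain ⟨d, -, hd, hd'⟩ := p.exists_boundary_dart R hr hx
  exact ⟨d.snd, hd', d.fst, hd, d.adj.symm⟩

/-- The forests rooted at `R` that are spanning subgraphs of `G`. They are subgraphs on all of `V`
rather than edge sets, so that edges are added with `⊔` and removed with `\`. -/
def rootedForests (G : SimpleGraph V) (R : Set V) : Set (SimpleGraph V) :=
  {H | H ≤ G ∧ IsRootedForest H R}

lemma rootedForests_univ : rootedForests G Set.univ = {⊥} := by
  ext H
  simp only [rootedForests, isRootedForest_univ_iff, Set.mem_ofPred_eq, Set.mem_singleton_iff]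
  exact and_iff_right_of_imp fun h ↦ h ▸ bot_le

lemma rootedForests_eq_empty (hR : R ≠ Set.univ) (hG : ∀ u ∉ R, ∀ v ∈ R, ¬G.Adj u v) :
    rootedForests G R = ∅ := by
  refine Set.eq_empty_of_forall_notMem fun H ⟨hHG, hH⟩ ↦ ?_
  obtain ⟨u, hu, v, hv, huv⟩ := hH.exists_adj hR
  exact hG u hu v hv (hHG huv)

lemma rootedForests_sup_edge (hu : u ∉ R) (hv : v ∈ R) (huv : ¬G.Adj u v) :
    rootedForests (G ⊔ edge u v) R =
      rootedForests G R ∪ (· ⊔ edge u v) '' rootedForests G (insert u R) := by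
  have hnadj {H : SimpleGraph V} (hH : H ≤ G) : ¬H.Adj u v := fun h ↦ huv (hH h)
  ext H
  constructor
  · rintro ⟨hHG, hH⟩
    have hdel : H \ edge u v ≤ G := sdiff_le_iff'.2 (sup_comm G _ ▸ hHG)
    by_cases hadj : H.Adj u v
    · have hHuv : H \ edge u v ⊔ edge u v = H :=
        sdiff_sup_cancel <| (edge_le_iff H).2 (.inr hadj)
      rw [← hHuv] at hH
      exact .inr ⟨_, ⟨hdel, (isRootedForest_sup_edge_iff hu hv (hnadj hdel)).1 hH⟩, hHuv⟩
    · exact .inl ⟨sdiff_edge H hadj ▸ hdel, hH⟩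
  · rintro (⟨hHG, hH⟩ | ⟨H, ⟨hHG, hH⟩, rfl⟩)
    · exact ⟨le_sup_of_le_left hHG, hH⟩
    · exact ⟨sup_le_sup_right hHG _, (isRootedForest_sup_edge_iff hu hv (hnadj hHG)).2 hH⟩

lemma ncard_rootedForests_sup_edge [Finite V] (hu : u ∉ R) (hv : v ∈ R) (huv : ¬G.Adj u v) :
    (rootedForests (G ⊔ edge u v) R).ncard =
      (rootedForests G R).ncard + (rootedForests G (insert u R)).ncard := by
  have hne : u ≠ v := fun h ↦ hu (h ▸ hv)
  have hsdiff {H : SimpleGraph V} (hH : H ≤ G) : (H ⊔ edge u v) \ edge u v = H := by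
    rw [sup_sdiff_right_self, sdiff_edge H fun h ↦ huv (hH h)]
  have hinj : Set.InjOn (· ⊔ edge u v) (rootedForests G (insert u R)) := fun H hH H' hH' h ↦ by
    rw [← hsdiff hH.1, ← hsdiff hH'.1]
    exact congrArg (· \ edge u v) h
  have hdisj : Disjoint (rootedForests G R)
      ((· ⊔ edge u v) '' rootedForests G (insert u R)) := by
    rw [Set.disjoint_left]
    rintro _ ⟨hHG, -⟩ ⟨H, -, rfl⟩
    exact huv <| hHG <| by simp [edge_adj, hne]
  rw [rootedForests_sup_edge hu hv huv, Set.ncard_union_eq hdisj, hinj.ncard_image]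

end RootedForests

section PrincipalMinors

open SimpleGraph

variable {V : Type*} [DecidableEq V] {R : Type*}

/-- The principal minor of `M` on the rows and columns indexed by `s`; note that `s` is the set of
indices that are kept, not of those deleted. -/
def principalMinor [CommRing R] (M : Matrix V V R) (s : Finset V) : R :=
  (M.submatrix (Subtype.val : s → V) Subtype.val).det

lemma principalMinor_congr [CommRing R] {M N : Matrix V V R} {s : Finset V}
    (h : ∀ i ∈ s, ∀ j ∈ s, M i j = N i j) : principalMinor M s = principalMinor N s :=
  congrArg det <| ext fun i j ↦ h i i.2 j j.2

lemma principalMinor_add_single [Finite V] [CommRing R] (M : Matrix V V R) {s : Finset V} {i : V}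
    (hi : i ∈ s) (c : R) :
    principalMinor (M + single i i c) s =
      principalMinor M s + c * principalMinor M (s.erase i) := by
  have := Fintype.ofFinite V
  simp only [principalMinor, ← det_piecewise_one_eq_submatrix_det]
  set N : Matrix V V R := of (s.piecewise M.row (1 : Matrix V V R).row)
  have hrow : of (s.piecewise (M + single i i c).row (1 : Matrix V V R).row) =
      N.updateRow i (N i + c • Pi.single i 1) := by
    ext a b
    obtain rfl | ha := eq_or_ne a i
    · simp [N, Finset.piecewise, hi, row, single_apply, Pi.single_apply, eq_comm]
    · by_cases has : a ∈ s <;> simp [N, Finset.piecewise, ha, has, row, ha.symm]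
  have herase : of ((s.erase i).piecewise M.row (1 : Matrix V V R).row) =
      N.updateRow i (Pi.single i 1) := by
    ext a b
    obtain rfl | ha := eq_or_ne a i
    · simp [Finset.piecewise, row, one_apply, Pi.single_apply, eq_comm]
    · by_cases has : a ∈ s <;> simp [N, Finset.piecewise, ha, has, row]
  rw [hrow, herase, det_updateRow_add, det_updateRow_smul, updateRow_eq_self]

variable [Fintype V]

lemma coeff_charpoly_eq_sum_principalMinor [CommRing R] (M : Matrix V V R) {j : ℕ}
    (hj : j ≤ Fintype.card V) :
    M.charpoly.coeff j = (-1) ^ (Fintype.card V - j) *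
      ∑ s ∈ Finset.univ.powersetCard (Fintype.card V - j), principalMinor M s := by
  simpa only [Nat.sub_sub_self hj] using! charpoly_coeff_eq_sum_minors M _ (Nat.sub_le _ j)

lemma lapMatrix_sup [Ring R] {G H : SimpleGraph V} [DecidableRel G.Adj] [DecidableRel H.Adj]
    [DecidableRel (G ⊔ H).Adj] (h : Disjoint G H) :
    (G ⊔ H).lapMatrix R = G.lapMatrix R + H.lapMatrix R := by
  have hadj (i j : V) : (if (G ⊔ H).Adj i j then 1 else 0 : R) =
      (if G.Adj i j then 1 else 0) + if H.Adj i j then 1 else 0 := by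
    have : ¬(G.Adj i j ∧ H.Adj i j) := fun hij ↦ disjoint_left.1 h i j hij.1 hij.2
    by_cases hG : G.Adj i j <;> by_cases hH : H.Adj i j <;> simp_all
  ext i j
  simp only [lapMatrix, degMatrix, Matrix.sub_apply, Matrix.add_apply, diagonal_apply,
    adjMatrix_apply, degree_eq_sum_if_adj, hadj, Finset.sum_add_distrib]
  split_ifs <;> abel

lemma lapMatrix_edge_apply_of_ne [Ring R] {u v i j : V} (hi : i ≠ v) (hj : j ≠ v) :
    (edge u v).lapMatrix R i j = single u u 1 i j := by
  have hadj (x : V) : (edge u v).Adj i x ↔ i = u ∧ x = v := by grind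
  simp only [lapMatrix, degMatrix, Matrix.sub_apply, diagonal_apply, adjMatrix_apply,
    degree_eq_sum_if_adj, single_apply, hadj]
  by_cases hij : i = j <;> by_cases hiu : i = u <;> simp_all [eq_comm]

lemma principalMinor_lapMatrix_sup_edge [CommRing R] {G : SimpleGraph V} [DecidableRel G.Adj]
    {u v : V} [DecidableRel (G ⊔ edge u v).Adj] {s : Finset V} (hu : u ∈ s) (hv : v ∉ s)
    (huv : ¬G.Adj u v) :
    principalMinor ((G ⊔ edge u v).lapMatrix R) s =
      principalMinor (G.lapMatrix R) s + principalMinor (G.lapMatrix R) (s.erase u) := by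
  have hentries : ∀ i ∈ s, ∀ j ∈ s,
      (G ⊔ edge u v).lapMatrix R i j = (G.lapMatrix R + single u u 1 : Matrix V V R) i j := by
    intro i hi j hj
    rw [lapMatrix_sup ((disjoint_edge G).2 huv), Matrix.add_apply, Matrix.add_apply,
      lapMatrix_edge_apply_of_ne (ne_of_mem_of_not_mem hi hv) (ne_of_mem_of_not_mem hj hv)]
  rw [principalMinor_congr hentries, principalMinor_add_single _ hu, one_mul]

lemma principalMinor_lapMatrix_eq_zero [CommRing R] {G : SimpleGraph V} [DecidableRel G.Adj]
    {s : Finset V} (hs : s.Nonempty) (hG : ∀ u ∈ s, ∀ v ∉ s, ¬G.Adj u v) :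
    principalMinor (G.lapMatrix R) s = 0 := by
  obtain ⟨i, hi⟩ := hs
  refine det_eq_zero_of_mulVec_eq_zero_of_mem_nonZeroDivisors (v := 1) (i := ⟨i, hi⟩) ?_ (one_mem _)
  ext ⟨u, hu⟩
  have hout (v : V) (hv : v ∉ s) : G.lapMatrix R u v = 0 := by
    simp [lapMatrix, degMatrix, ne_of_mem_of_not_mem hu hv, hG u hu v hv]
  calc ∑ v : s, G.lapMatrix R u v * 1 = ∑ v ∈ s, G.lapMatrix R u v := by
        simpa only [mul_one] using Finset.sum_coe_sort s (G.lapMatrix R u)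
    _ = ∑ v, G.lapMatrix R u v :=
        Finset.sum_subset s.subset_univ fun v _ hv ↦ hout v hv
    _ = 0 := by
        simpa [mulVec, dotProduct] using congrFun (lapMatrix_mulVec_const_eq_zero (R := R) G) u

theorem principalMinor_lapMatrix_eq_ncard_rootedForests [CommRing R] (G : SimpleGraph V)
    [hdec : DecidableRel G.Adj] (s : Finset V) :
    principalMinor (G.lapMatrix R) s = (rootedForests G (↑s)ᶜ).ncard := by
  classical
  induction G using WellFoundedLT.induction generalizing s hdec with | _ G ih
  by_cases hcross : ∃ u ∈ s, ∃ v ∉ s, G.Adj u v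
  · obtain ⟨u, hu, v, hv, huv⟩ := hcross
    obtain ⟨H, hH, rfl⟩ : ∃ H : SimpleGraph V, ¬H.Adj u v ∧ H ⊔ edge u v = G :=
      ⟨G \ edge u v, by simp [edge_adj, huv.ne],
        sdiff_sup_cancel <| (edge_le_iff G).2 (.inr huv)⟩
    have hlt : H < H ⊔ edge u v := lt_sup_edge H u v huv.ne hH
    have hinsert : insert u (s : Set V)ᶜ = (↑(s.erase u))ᶜ := by
      ext x
      simp only [Set.mem_insert_iff, Set.mem_compl_iff, Finset.mem_coe, Finset.mem_erase]
      tauto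
    rw [principalMinor_lapMatrix_sup_edge hu hv hH, ih H hlt, ih H hlt,
      ncard_rootedForests_sup_edge (by simpa) (by simpa) hH, hinsert, Nat.cast_add]
  · push Not at hcross
    obtain rfl | hs := s.eq_empty_or_nonempty
    · simp [principalMinor, rootedForests_univ]
    · rw [principalMinor_lapMatrix_eq_zero hs hcross, rootedForests_eq_empty]
      · simp
      · simpa [Set.compl_ne_univ] using hs.ne_empty
      · simpa using hcross

end PrincipalMinors

section Polynomials

open Polynomial

variable {K : Type*} [CommRing K] [IsDomain K] [DecidableEq K]

lemma trailingCoeff_prod_X_sub_C (S : Multiset K) :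
    (S.map fun a ↦ X - C a).prod.trailingCoeff = ((S.filter (· ≠ 0)).map Neg.neg).prod := by
  induction S using Multiset.induction with
  | empty => simp [trailingCoeff]
  | cons a S ih =>
    rw [Multiset.map_cons, Multiset.prod_cons, trailingCoeff_mul, ih]
    obtain rfl | ha := eq_or_ne a 0
    · simp [trailingCoeff]
    · have hdegree : (X - C a).natTrailingDegree = 0 :=
        natTrailingDegree_eq_zero.2 <| .inr <| by simpa
      simp [trailingCoeff, hdegree, ha]

lemma prod_filter_roots_ne_zero_eq_trailingCoeff {p : K[X]} (hp : p.Monic) (hsplits : p.Splits) :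
    (p.roots.filter (· ≠ 0)).prod =
      (-1) ^ (p.natDegree - p.natTrailingDegree) * p.trailingCoeff := by
  have hcard : (p.roots.filter (· ≠ 0)).card = p.natDegree - p.natTrailingDegree := by
    rw [hsplits.natDegree_eq_card_roots, ← rootMultiplicity_eq_natTrailingDegree', ← count_roots,
      Multiset.count_eq_card_filter_eq]
    simp only [eq_comm (a := (0 : K))]
    exact Nat.eq_sub_of_add_eq' <| by rw [← Multiset.card_add, Multiset.filter_add_not]
  have htrailing : p.trailingCoeff = (-1) ^ (p.roots.filter (· ≠ 0)).card *
      (p.roots.filter (· ≠ 0)).prod := by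
    conv_lhs => rw [hsplits.eq_prod_roots_of_monic hp, trailingCoeff_prod_X_sub_C]
    exact Multiset.prod_map_neg _
  rw [htrailing, hcard, ← mul_assoc, ← mul_pow, neg_one_mul, neg_neg, one_pow, one_mul]

end Polynomials

section MaxSpanningForests

open SimpleGraph

variable {V : Type*} {G H : SimpleGraph V} {R : Set V}

lemma natCard_connectedComponent_eq_ncard (hR : IsTransversal G R) :
    Nat.card G.ConnectedComponent = R.ncard := by
  rw [hR.ncard_eq, Set.ncard_univ]

lemma natCard_connectedComponent_le [Fintype V] (G : SimpleGraph V) :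
    Nat.card G.ConnectedComponent ≤ Fintype.card V := by
  rw [← Nat.card_eq_fintype_card]
  exact Nat.card_le_card_of_surjective G.connectedComponentMk Quot.mk_surjective

lemma card_add_natCard_connectedComponent [Fintype V] {s : Finset V}
    (hs : IsTransversal G (↑s)ᶜ) :
    s.card + Nat.card G.ConnectedComponent = Fintype.card V := by
  rw [natCard_connectedComponent_eq_ncard hs, ← Set.ncard_coe_finset, Set.ncard_add_ncard_compl,
    Nat.card_eq_fintype_card]

lemma isTransversal_iff_of_le_of_natCard_le [Finite V] (hle : H ≤ G)
    (hcard : Nat.card H.ConnectedComponent ≤ Nat.card G.ConnectedComponent) :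
    IsTransversal H R ↔ IsTransversal G R := by
  have hbij := (ConnectedComponent.surjective_map_ofLE hle).bijective_of_nat_card_le hcard
  have hreach (x y : V) : H.Reachable x y ↔ G.Reachable x y := by
    simpa [ConnectedComponent.eq] using
      (hbij.1.eq_iff (a := H.connectedComponentMk x) (b := H.connectedComponentMk y)).symm
  simp only [isTransversal_iff, hreach]

lemma rootedForests_eq_empty_of_not_isTransversal [Finite V] (hR : ¬IsTransversal G R)
    (hcard : R.ncard ≤ Nat.card G.ConnectedComponent) : rootedForests G R = ∅ :=
  Set.eq_empty_of_forall_notMem fun _ ⟨hHG, hH⟩ ↦ hR <|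
    (isTransversal_iff_of_le_of_natCard_le hHG <|
      (natCard_connectedComponent_eq_ncard hH.2).trans_le hcard).1 hH.2

lemma rootedForests_nonempty (hR : IsTransversal G R) : (rootedForests G R).Nonempty := by
  obtain ⟨H, hHG, hH, hreach⟩ := G.exists_isAcyclic_reachable_eq_le
  refine ⟨H, hHG, hH, ?_⟩
  rwa [isTransversal_iff, hreach, ← isTransversal_iff]

lemma setOf_isMaxSpanningForest_eq_image_rootedForests [Finite V] (hR : IsTransversal G R) :
    {T | IsMaxSpanningForest G T} = edgeSet '' rootedForests G R := by
  ext T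
  constructor
  · rintro ⟨hTG, hT, hcard⟩
    have hle : fromEdgeSet T ≤ G := (fromEdgeSet_le G).2 <| Set.sdiff_subset.trans hTG
    refine ⟨fromEdgeSet T, ⟨hle, hT, (isTransversal_iff_of_le_of_natCard_le hle hcard.le).2 hR⟩, ?_⟩
    rw [edgeSet_fromEdgeSet, sdiff_eq_left]
    exact Set.subset_compl_iff_disjoint_right.1 <| hTG.trans G.edgeSet_subset_compl_diagSet
  · rintro ⟨H, ⟨hHG, hH, hRH⟩, rfl⟩
    rw [Set.mem_ofPred_eq, IsMaxSpanningForest, fromEdgeSet_edgeSet]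
    refine ⟨edgeSet_mono hHG, hH, ?_⟩
    rw [natCard_connectedComponent_eq_ncard hR, natCard_connectedComponent_eq_ncard hRH]

lemma ncard_rootedForests_eq_forestCount [Finite V] (hR : IsTransversal G R) :
    (rootedForests G R).ncard = forestCount G := by
  rw [← Set.ncard_image_of_injective _ edgeSet_injective,
    ← setOf_isMaxSpanningForest_eq_image_rootedForests hR]
  rfl

lemma forestCount_pos [Finite V] (G : SimpleGraph V) : 0 < forestCount G := by
  have hR : IsTransversal G (Quot.out '' Set.univ) := .image_out Set.univ
  rw [← ncard_rootedForests_eq_forestCount hR, Set.ncard_pos]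
  exact rootedForests_nonempty hR

lemma isTransversal_range {ρ : G.ConnectedComponent → V}
    (hρ : ∀ K, G.connectedComponentMk (ρ K) = K) : IsTransversal G (Set.range ρ) := by
  refine ⟨fun _ _ ↦ Set.mem_univ _, ?_, fun K _ ↦ ⟨ρ K, Set.mem_range_self K, hρ K⟩⟩
  rintro _ ⟨K, rfl⟩ _ ⟨K', rfl⟩ h
  rw [← hρ K, h, hρ K']

lemma bijOn_range_sections_isTransversal (G : SimpleGraph V) :
    Set.BijOn Set.range {ρ : G.ConnectedComponent → V | ∀ K, G.connectedComponentMk (ρ K) = K}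
      {R | IsTransversal G R} := by
  refine ⟨fun ρ ↦ isTransversal_range, fun ρ hρ ρ' hρ' hrange ↦ funext fun K ↦ ?_, fun R hR ↦ ?_⟩
  · obtain ⟨K', hK'⟩ : ρ K ∈ Set.range ρ' := hrange ▸ Set.mem_range_self K
    rw [← hK', ← hρ' K', hK', hρ K]
  · choose ρ hρR hρ using fun K ↦ hR.surjOn (Set.mem_univ K)
    exact ⟨ρ, hρ, (Set.range_subset_iff.2 hρR).antisymm fun r hr ↦
      ⟨G.connectedComponentMk r, hR.injOn (hρR _) hr (hρ _)⟩⟩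

lemma natCard_sections_eq_finprod [Finite V] (G : SimpleGraph V) :
    Nat.card {ρ : G.ConnectedComponent → V // ∀ K, G.connectedComponentMk (ρ K) = K} =
      ∏ᶠ K : G.ConnectedComponent, Nat.card K.supp := by
  have := Fintype.ofFinite G.ConnectedComponent
  rw [finprod_eq_prod_of_fintype, ← Nat.card_pi]
  exact Nat.card_congr (Equiv.subtypePiEquivPi (p := fun K v ↦ G.connectedComponentMk v = K))

lemma ncard_isTransversal_eq_finprod [Finite V] (G : SimpleGraph V) :
    {R | IsTransversal G R}.ncard = ∏ᶠ K : G.ConnectedComponent, Nat.card K.supp := by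
  rw [← (bijOn_range_sections_isTransversal G).image_eq,
    (bijOn_range_sections_isTransversal G).injOn.ncard_image, ← natCard_sections_eq_finprod]
  rfl

lemma ncard_isTransversal_compl_eq_finprod [Finite V] (G : SimpleGraph V) :
    {s : Finset V | IsTransversal G (↑s)ᶜ}.ncard =
      ∏ᶠ K : G.ConnectedComponent, Nat.card K.supp := by
  have hbij : Function.Bijective fun s : Finset V ↦ (s : Set V)ᶜ :=
    ⟨compl_injective.comp Finset.coe_injective, fun R ↦ ⟨Rᶜ.toFinite.toFinset, by simp⟩⟩
  rw [← ncard_isTransversal_eq_finprod, ← Set.ncard_preimage_of_injective_subset_range hbij.1]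
  · rfl
  · simp [hbij.2.range_eq]

lemma natCard_rootedMaxSpanningForests [Finite V] (G : SimpleGraph V) :
    Nat.card {p : Set (Sym2 V) × (G.ConnectedComponent → V) //
      IsMaxSpanningForest G p.1 ∧ ∀ K, G.connectedComponentMk (p.2 K) = K} =
        (∏ᶠ K : G.ConnectedComponent, Nat.card K.supp) * forestCount G := by
  rw [← natCard_sections_eq_finprod, mul_comm, forestCount, ← Nat.card_prod]
  exact Nat.card_congr <| Equiv.subtypeProdEquivProd (p := IsMaxSpanningForest G)
    (q := fun ρ : G.ConnectedComponent → V ↦ ∀ K, G.connectedComponentMk (ρ K) = K)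

end MaxSpanningForests

section Spectrum

variable {V : Type*} [Fintype V] [DecidableEq V] (R : Type*) [CommRing R] (G : SimpleGraph V)
  [DecidableRel G.Adj]

variable {G} in
lemma principalMinor_lapMatrix_eq_forestCount {s : Finset V} (hs : IsTransversal G (↑s)ᶜ) :
    principalMinor (G.lapMatrix R) s = forestCount G := by
  rw [principalMinor_lapMatrix_eq_ncard_rootedForests, ncard_rootedForests_eq_forestCount hs]

variable {G} in
lemma principalMinor_lapMatrix_eq_zero_of_not_isTransversal {s : Finset V}
    (hs : ¬IsTransversal G (↑s)ᶜ)
    (hcard : Fintype.card V ≤ s.card + Nat.card G.ConnectedComponent) :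
    principalMinor (G.lapMatrix R) s = 0 := by
  have hcompl : ((s : Set V)ᶜ).ncard ≤ Nat.card G.ConnectedComponent := by
    rw [← Finset.coe_compl, Set.ncard_coe_finset, Finset.card_compl]
    omega
  rw [principalMinor_lapMatrix_eq_ncard_rootedForests,
    rootedForests_eq_empty_of_not_isTransversal hs hcompl, Set.ncard_empty, Nat.cast_zero]

lemma sum_principalMinor_lapMatrix_powersetCard :
    ∑ s ∈ Finset.univ.powersetCard (Fintype.card V - Nat.card G.ConnectedComponent),
      principalMinor (G.lapMatrix R) s =
        ((∏ᶠ K : G.ConnectedComponent, Nat.card K.supp) * forestCount G : ℕ) := by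
  classical
  have hminor (s : Finset V)
      (hs : s ∈ Finset.univ.powersetCard (Fintype.card V - Nat.card G.ConnectedComponent)) :
      principalMinor (G.lapMatrix R) s =
        if IsTransversal G (↑s)ᶜ then (forestCount G : R) else 0 := by
    have hcard := (Finset.mem_powersetCard.1 hs).2
    split_ifs with htrans
    · exact principalMinor_lapMatrix_eq_forestCount R htrans
    · exact principalMinor_lapMatrix_eq_zero_of_not_isTransversal R htrans (by omega)
  have hfilter : ((Finset.univ.powersetCard (Fintype.card V - Nat.card G.ConnectedComponent)).filter
      fun s : Finset V ↦ IsTransversal G (↑s)ᶜ : Set (Finset V)) =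
        {s : Finset V | IsTransversal G (↑s)ᶜ} := by
    ext s
    simpa using fun hs : IsTransversal G (↑s)ᶜ ↦
      Nat.eq_sub_of_add_eq (card_add_natCard_connectedComponent hs)
  rw [Finset.sum_congr rfl hminor, ← Finset.sum_filter, Finset.sum_const, ← Set.ncard_coe_finset,
    hfilter, ncard_isTransversal_compl_eq_finprod, nsmul_eq_mul, Nat.cast_mul]

lemma coeff_natCard_charpoly_lapMatrix :
    (G.lapMatrix R).charpoly.coeff (Nat.card G.ConnectedComponent) =
      (-1) ^ (Fintype.card V - Nat.card G.ConnectedComponent) *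
        ((∏ᶠ K : G.ConnectedComponent, Nat.card K.supp) * forestCount G : ℕ) := by
  rw [coeff_charpoly_eq_sum_principalMinor _ (natCard_connectedComponent_le G),
    sum_principalMinor_lapMatrix_powersetCard]

lemma coeff_charpoly_lapMatrix_eq_zero {j : ℕ} (hj : j < Nat.card G.ConnectedComponent) :
    (G.lapMatrix R).charpoly.coeff j = 0 := by
  have hle := natCard_connectedComponent_le G
  rw [coeff_charpoly_eq_sum_principalMinor _ (by omega), Finset.sum_eq_zero, mul_zero]
  intro s hs
  have hcard := (Finset.mem_powersetCard.1 hs).2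
  refine principalMinor_lapMatrix_eq_zero_of_not_isTransversal R (fun hR ↦ ?_) (by omega)
  have := card_add_natCard_connectedComponent hR
  omega

lemma natTrailingDegree_charpoly_lapMatrix [IsDomain R] [CharZero R] :
    (G.lapMatrix R).charpoly.natTrailingDegree = Nat.card G.ConnectedComponent := by
  have hcoeff : (G.lapMatrix R).charpoly.coeff (Nat.card G.ConnectedComponent) ≠ 0 := by
    rw [coeff_natCard_charpoly_lapMatrix]
    refine mul_ne_zero (by simp) (Nat.cast_ne_zero.2 <| mul_ne_zero ?_ (forestCount_pos G).ne')
    rw [← natCard_sections_eq_finprod]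
    exact Nat.card_ne_zero.2 ⟨⟨Quot.out, Quot.out_eq⟩, inferInstance⟩
  exact (Polynomial.natTrailingDegree_le_of_ne_zero hcoeff).antisymm <|
    Polynomial.le_natTrailingDegree (charpoly_monic _).ne_zero fun j ↦
      coeff_charpoly_lapMatrix_eq_zero R G

theorem prod_filter_roots_charpoly_lapMatrix_ne_zero [IsDomain R] [CharZero R] [DecidableEq R]
    (h : (G.lapMatrix R).charpoly.Splits) :
    ((G.lapMatrix R).charpoly.roots.filter (· ≠ 0)).prod =
      ((∏ᶠ K : G.ConnectedComponent, Nat.card K.supp) * forestCount G : ℕ) := by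
  rw [prod_filter_roots_ne_zero_eq_trailingCoeff (charpoly_monic _) h, Polynomial.trailingCoeff,
    natTrailingDegree_charpoly_lapMatrix, charpoly_natDegree_eq_dim,
    coeff_natCard_charpoly_lapMatrix, ← mul_assoc, ← mul_pow, neg_one_mul, neg_neg, one_pow,
    one_mul]

theorem det_lapMatrix_submatrix_compl_range {ρ : G.ConnectedComponent → V}
    (hρ : ∀ K, G.connectedComponentMk (ρ K) = K) [Fintype {v : V // v ∉ Set.range ρ}] :
    ((G.lapMatrix R).submatrix
      (Subtype.val : {v : V // v ∉ Set.range ρ} → V) Subtype.val).det = forestCount G := by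
  classical
  have hs : (((Set.range ρ)ᶜ.toFinset : Finset V) : Set V)ᶜ = Set.range ρ := by simp
  rw [← principalMinor_lapMatrix_eq_forestCount R (hs ▸ isTransversal_range hρ)]
  let e : {v : V // v ∉ Set.range ρ} ≃ (Set.range ρ)ᶜ.toFinset :=
    Equiv.subtypeEquivRight fun v ↦ by simp
  exact det_submatrix_equiv_self e ((G.lapMatrix R).submatrix Subtype.val Subtype.val)

end Spectrum

theorem matrix_forest_theorem_general {V : Type*} [Fintype V] [DecidableEq V]
    (G : SimpleGraph V) [DecidableRel G.Adj] (K : Type*) [CommRing K] [IsDomain K] [CharZero K]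
    [DecidableEq K] (hsplits : (G.lapMatrix K).charpoly.Splits) (R : Type*) [CommRing R] :
    (((G.lapMatrix K).charpoly.roots.filter (· ≠ 0)).prod =
        (∏ᶠ C : G.ConnectedComponent, (Nat.card C.supp : K)) * (forestCount G : K)) ∧
    (∀ ρ : G.ConnectedComponent → V, (∀ C, G.connectedComponentMk (ρ C) = C) →
      (forestCount G : R) =
        ((G.lapMatrix R).submatrix
          (Subtype.val : {v : V // v ∉ Set.range ρ} → V) Subtype.val).det) ∧
    ((Nat.card {p : Set (Sym2 V) × (G.ConnectedComponent → V) //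
        IsMaxSpanningForest G p.1 ∧ ∀ C, G.connectedComponentMk (p.2 C) = C} : K) =
      ((G.lapMatrix K).charpoly.roots.filter (· ≠ 0)).prod) := by
  have hprod := prod_filter_roots_charpoly_lapMatrix_ne_zero K G hsplits
  refine ⟨?_, fun ρ hρ ↦ (det_lapMatrix_submatrix_compl_range R G hρ).symm, ?_⟩
  · rw [hprod, finprod_eq_prod_of_fintype, finprod_eq_prod_of_fintype, Nat.cast_mul, Nat.cast_prod]
  · rw [hprod, natCard_rootedMaxSpanningForests]

/-- **The Matrix-Forest Theorem for possibly disconnected graphs.**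
(1) The product of the nonzero Laplacian eigenvalues (with algebraic multiplicity) equals
`n_1 ⋯ n_c · τ(G)`, where the `n_i` are the orders of the connected components;
(2) for any choice `ρ` of one vertex from each component, `τ(G)` is the determinant of the
Laplacian with the corresponding `c` rows and columns deleted; and
(3) the number of rooted maximal spanning forests equals the product of the nonzero
Laplacian eigenvalues. -/
theorem matrix_forest_theorem {V : Type*} [Fintype V] [DecidableEq V]
    (G : SimpleGraph V) [DecidableRel G.Adj] :
    (((SimpleGraph.lapMatrix ℂ G).charpoly.roots.filter (· ≠ 0)).prod =
        (∏ᶠ K : G.ConnectedComponent, (Nat.card K.supp : ℂ)) * (forestCount G : ℂ)) ∧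
    (∀ ρ : G.ConnectedComponent → V, (∀ K, G.connectedComponentMk (ρ K) = K) →
      (forestCount G : ℤ) =
        ((SimpleGraph.lapMatrix ℤ G).submatrix
          (Subtype.val : {v : V // v ∉ Set.range ρ} → V) Subtype.val).det) ∧
    ((Nat.card {p : Set (Sym2 V) × (G.ConnectedComponent → V) //
        IsMaxSpanningForest G p.1 ∧ ∀ K, G.connectedComponentMk (p.2 K) = K} : ℂ) =
      ((SimpleGraph.lapMatrix ℂ G).charpoly.roots.filter (· ≠ 0)).prod) := by
  exact matrix_forest_theorem_general G ℂ (IsAlgClosed.splits _) ℤ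
end

section
/- Fix integers n ≥ 2 and 1 ≤ d ≤ n−1. Call a set T ⊆ F_d a simplicial spanning tree of the d-skeleton Δ_{n,d} of the n-vertex simplex if |T| = C(n−1,d) and the columns of ∂_d indexed by T are linearly independent over ℚ. For every such T, the abelian group H(T) := ker_ℤ(∂_{d−1}) / (the subgroup of ℤ^{F_{d−1}} generated by the columns of ∂_d indexed by T) is finite, and Kalai's formula holds: the sum over all simplicial spanning trees T of |H(T)|² equals n^{C(n−2,d)}. -/
open Matrix

/-- The `k`-th simplicial boundary matrix of the simplex on vertex set `Fin n`:
rows are indexed by `k`-element subsets, columns by `(k+1)`-element subsets; the entry in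
position `(σ, τ)` is `(-1)^i` if `σ = τ ∖ {x}` where `x` is the `i`-th smallest element of
`τ`, and `0` otherwise.  (`k = 0` gives the all-ones augmentation row `∂_0`.) -/
def simplexBdry (n k : ℕ) :
    Matrix {σ : Finset (Fin n) // σ.card = k} {τ : Finset (Fin n) // τ.card = k + 1} ℤ :=
  fun σ τ => ∑ x ∈ τ.1,
    if σ.1 = τ.1.erase x then (-1 : ℤ) ^ ((τ.1.filter (· < x)).card) else 0

/-- `T` is a simplicial spanning tree of the `d`-skeleton `Δ_{n,d}` (here `d = e + 1`):
`T` is a set of `d`-dimensional faces with `|T| = C(n-1, d)` whose columns of `∂_d` are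
linearly independent over `ℚ`. -/
def IsSST (n e : ℕ) (T : Finset {τ : Finset (Fin n) // τ.card = (e + 1) + 1}) : Prop :=
  T.card = Nat.choose (n - 1) (e + 1) ∧
    LinearIndependent ℚ (fun τ : T => fun σ => ((simplexBdry n (e + 1) σ τ.1 : ℤ) : ℚ))

/-- The group `H(T) = ker_ℤ(∂_{d-1}) / (subgroup generated by the columns of `∂_d`
indexed by `T`)`, for `d = e + 1`. -/
def KalaiH (n e : ℕ) (T : Finset {τ : Finset (Fin n) // τ.card = (e + 1) + 1}) : Type _ :=
  LinearMap.ker (simplexBdry n e).mulVecLin ⧸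
    Submodule.comap (LinearMap.ker (simplexBdry n e).mulVecLin).subtype
      (Submodule.span ℤ ((fun τ => (simplexBdry n (e + 1))ᵀ τ) '' ↑T))

noncomputable instance (n e : ℕ) (T : Finset {τ : Finset (Fin n) // τ.card = (e + 1) + 1}) :
    AddCommGroup (KalaiH n e T) := by
  unfold KalaiH; infer_instance

/-!
Split the faces of the simplex on `m + 1` vertices into those containing the vertex `0` (cones)
and those avoiding it (shifted faces). In this ordering the boundary matrix of the larger simplex is
`[[-∂, 0], [1, ∂]]` in terms of the boundary matrices of the simplex on `m` vertices; induction on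
`m` gives `∂ ∂ = 0` and that the Laplacian `∂ᵀ ∂ + ∂ ∂ᵀ` is the scalar `m`.

An integral cycle is determined by its values on the faces avoiding `0`, which are arbitrary. Hence
`|H(T)|` is the absolute value of the maximal minor, with columns `T`, of the reduced boundary
matrix `[1 | ∂]`, and `T` is a spanning tree exactly when this minor is nonzero. By Cauchy–Binet the
sum of the squares of these minors is `det (1 + ∂ ∂ᵀ)`.

Finally `(1 + ∂_kᵀ ∂_k) (1 + ∂_{k+1} ∂_{k+1}ᵀ) = m + 1`, and `det (1 + ∂_kᵀ ∂_k)` equals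
`det (1 + ∂_k ∂_kᵀ)`, so these determinants satisfy a recursion in `k` which Pascal's rule solves.
-/

namespace Kalai

section Enumerations

variable {r c : Type*} [Fintype r]
  (e : ∀ T : {T : Finset c // T.card = Fintype.card r}, r ≃ T.1)

theorem injective_enumeration_comp_perm :
    Function.Injective fun (p : (_ : {T : Finset c // T.card = Fintype.card r}) × Equiv.Perm r)
      (i : r) => (e p.1 (p.2 i) : c) := by
  have range_eq (T) (σ : Equiv.Perm r) : Set.range (fun i => (e T (σ i) : c)) = T.1 := by
    rw [← Subtype.range_coe (s := (T.1 : Set c))]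
    exact (σ.trans (e T)).surjective.range_comp Subtype.val
  rintro ⟨T, σ⟩ ⟨T', σ'⟩ h
  obtain rfl : T = T' := Subtype.ext <| Finset.coe_injective <| by
    rw [← range_eq T σ, ← range_eq T' σ']
    exact congrArg Set.range h
  obtain rfl : σ = σ' := Equiv.ext fun i => (e T).injective (Subtype.ext (congrFun h i))
  rfl

theorem exists_enumeration_comp_perm_eq {f : r → c} (hf : Function.Injective f) :
    ∃ T, ∃ σ : Equiv.Perm r, ∀ i, (e T (σ i) : c) = f i := by
  let T : {T : Finset c // T.card = Fintype.card r} := ⟨Finset.univ.map ⟨f, hf⟩, Finset.card_map _⟩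
  let g : r → T.1 := fun i => ⟨f i, Finset.mem_map_of_mem ⟨f, hf⟩ (Finset.mem_univ i)⟩
  have g_injective : Function.Injective g := fun i j h => hf (congrArg Subtype.val h)
  have bijective : Function.Bijective ((e T).symm ∘ g) :=
    Finite.injective_iff_bijective.1 ((e T).symm.injective.comp g_injective)
  exact ⟨T, .ofBijective _ bijective, fun i => congrArg Subtype.val ((e T).apply_symm_apply (g i))⟩

end Enumerations

section CauchyBinet

variable {R r c : Type*} [CommRing R] [Fintype r] [DecidableEq r]

theorem det_mul_eq_sum_prod_mul_det_submatrix [Fintype c] (A : Matrix r c R) (B : Matrix c r R) :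
    (A * B).det = ∑ f : r → c, (∏ i, A i (f i)) * (B.submatrix f id).det := by
  have rows_mul : A * B = fun i => ∑ j, A i j • B j := by
    ext i k
    simp [mul_apply]
  change detRowAlternating.toMultilinearMap (A * B) = _
  classical
  rw [rows_mul, MultilinearMap.map_sum]
  exact Finset.sum_congr rfl fun f _ => MultilinearMap.map_smul_univ _ _ _

theorem sum_perm_prod_mul_det_submatrix (A : Matrix r c R) (B : Matrix c r R) (g : r → c) :
    ∑ σ : Equiv.Perm r, (∏ i, A i (g (σ i))) * (B.submatrix (g ∘ σ) id).det =
      (A.submatrix id g).det * (B.submatrix g id).det := by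
  rw [← det_transpose (A.submatrix id g), det_apply', Finset.sum_mul]
  refine Finset.sum_congr rfl fun σ _ => ?_
  have det_comp : (B.submatrix (g ∘ σ) id).det =
      (Equiv.Perm.sign σ : R) * (B.submatrix g id).det := det_permute σ (B.submatrix g id)
  have prod_comp : ∏ i, A i (g (σ i)) = ∏ i, (A.submatrix id g)ᵀ (σ i) i := rfl
  rw [det_comp, prod_comp]
  ring

/-- The **Cauchy–Binet formula**. The maximal minors are indexed by sets `T` of columns of `A`, and
`e T` is an arbitrary enumeration of `T`. -/
theorem det_mul_eq_sum_det_mul_det [Fintype c] (A : Matrix r c R) (B : Matrix c r R)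
    (e : ∀ T : {T : Finset c // T.card = Fintype.card r}, r ≃ T.1) :
    (A * B).det = ∑ T, (A.submatrix id fun i => (e T i : c)).det *
      (B.submatrix (fun i => (e T i : c)) id).det := by
  simp only [← sum_perm_prod_mul_det_submatrix]
  rw [det_mul_eq_sum_prod_mul_det_submatrix, ← Fintype.sum_sigma']
  refine (Fintype.sum_of_injective _ (injective_enumeration_comp_perm e) _ _ ?_ fun _ => rfl).symm
  intro f hf
  have not_injective : ¬ Function.Injective f := fun h => hf <| by
    obtain ⟨T, σ, hσ⟩ := exists_enumeration_comp_perm_eq e h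
    exact ⟨⟨T, σ⟩, funext hσ⟩
  obtain ⟨i, j, hij, hne⟩ := Function.not_injective_iff.1 not_injective
  rw [det_zero_of_row_eq hne (by ext; simp [hij]), mul_zero]

end CauchyBinet

/-- The faces of the simplex on the vertex set `Fin n` that have `k` vertices, so that
`Face n (k + 1)` is the set `F_k` of `k`-dimensional faces. -/
abbrev Face (n k : ℕ) : Type := {σ : Finset (Fin n) // σ.card = k}

instance (k : ℕ) : IsEmpty (Face 0 (k + 1)) :=
  ⟨fun σ => by simpa [Finset.eq_empty_of_isEmpty] using σ.2⟩

/-- The face of the simplex on `m + 1` vertices obtained by renaming each vertex `x` to `x + 1`;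
these are the faces that avoid the vertex `0`. -/
def shift {m k : ℕ} (s : Face m k) : Face (m + 1) k :=
  ⟨s.1.map (Fin.succEmb m), by rw [Finset.card_map, s.2]⟩

/-- The cone with apex `0` over the shifted face; these are the faces that contain `0`. -/
def cone {m k : ℕ} (s : Face m k) : Face (m + 1) (k + 1) :=
  ⟨insert 0 (shift s).1, by
    rw [Finset.card_insert_of_notMem (by simp [shift]), (shift s).2]⟩

section ConeAndShift

variable {m k : ℕ}

theorem insert_zero_map_succEmb_inj {s t : Finset (Fin m)} :
    insert 0 (s.map (Fin.succEmb m)) = insert 0 (t.map (Fin.succEmb m)) ↔ s = t := by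
  rw [← Finset.map_inj (f := Fin.succEmb m)]
  refine ⟨fun h => ?_, congrArg _⟩
  simpa using congrArg (Finset.erase · 0) h

theorem zero_notMem_shift (s : Face m k) : (0 : Fin (m + 1)) ∉ (shift s).1 := by
  simp [shift]

theorem zero_mem_cone (s : Face m k) : (0 : Fin (m + 1)) ∈ (cone s).1 :=
  Finset.mem_insert_self _ _

theorem shift_injective : Function.Injective (shift : Face m k → Face (m + 1) k) := fun _ _ h =>
  Subtype.ext (Finset.map_injective _ (congrArg Subtype.val h))

theorem cone_injective : Function.Injective (cone : Face m k → Face (m + 1) (k + 1)) :=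
  fun _ _ h => Subtype.ext (insert_zero_map_succEmb_inj.1 (congrArg Subtype.val h))

theorem exists_shift_eq {u : Face (m + 1) k} (hu : 0 ∉ u.1) : ∃ s, shift s = u := by
  have hsub : u.1 ⊆ Finset.univ.map (Fin.succEmb m) := fun x hx =>
    Finset.mem_map.2 ((Fin.exists_succ_eq.2 (ne_of_mem_of_not_mem hx hu)).imp (by simp))
  obtain ⟨s, -, hs⟩ := Finset.subset_map_iff.1 hsub
  exact ⟨⟨s, by rw [← u.2, hs, Finset.card_map]⟩, Subtype.ext hs.symm⟩

theorem exists_cone_eq {u : Face (m + 1) (k + 1)} (hu : 0 ∈ u.1) : ∃ s, cone s = u := by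
  have card_erase : (u.1.erase 0).card = k := by rw [Finset.card_erase_of_mem hu, u.2]; rfl
  obtain ⟨s, hs⟩ := exists_shift_eq (u := ⟨_, card_erase⟩) (Finset.notMem_erase _ _)
  refine ⟨s, Subtype.ext ?_⟩
  rw [← Finset.insert_erase hu]
  exact congrArg (insert 0 ·.1) hs

end ConeAndShift

/-- A face of positive size either contains the vertex `0` and is a cone, or avoids it and is
a shifted face. -/
noncomputable def coneSumShift (m k : ℕ) : Face m k ⊕ Face m (k + 1) ≃ Face (m + 1) (k + 1) :=
  Equiv.ofBijective (Sum.elim cone shift) <| by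
    refine ⟨cone_injective.sumElim shift_injective fun s t h => ?_, fun u => ?_⟩
    · exact zero_notMem_shift t (h ▸ zero_mem_cone s)
    · by_cases hu : 0 ∈ u.1
      · exact (exists_cone_eq hu).elim fun s hs => ⟨.inl s, hs⟩
      · exact (exists_shift_eq hu).elim fun s hs => ⟨.inr s, hs⟩

/-- The empty face of the larger simplex is the shifted empty face. -/
noncomputable def shiftEmpty (m : ℕ) : Face m 0 ≃ Face (m + 1) 0 :=
  Equiv.ofBijective shift
    ⟨shift_injective, fun u => exists_shift_eq (by simp [Finset.card_eq_zero.1 u.2])⟩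

section BoundaryBlocks

variable {m k : ℕ}

theorem erase_succ_shift (t : Face m k) (x : Fin m) :
    (shift t).1.erase x.succ = (t.1.erase x).map (Fin.succEmb m) :=
  (Finset.map_erase (Fin.succEmb m) t.1 x).symm

theorem erase_succ_cone (t : Face m k) (x : Fin m) :
    (cone t).1.erase x.succ = insert 0 ((t.1.erase x).map (Fin.succEmb m)) := by
  rw [cone, Finset.erase_insert_of_ne (Fin.succ_ne_zero x).symm, erase_succ_shift]

theorem erase_zero_cone (t : Face m k) : (cone t).1.erase 0 = (shift t).1 :=
  Finset.erase_insert (zero_notMem_shift t)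

theorem card_filter_lt_succ_shift (t : Face m k) (x : Fin m) :
    ((shift t).1.filter (· < x.succ)).card = (t.1.filter (· < x)).card := by
  simp [shift, Finset.filter_map, Function.comp_def]

theorem card_filter_lt_succ_cone (t : Face m k) (x : Fin m) :
    ((cone t).1.filter (· < x.succ)).card = (t.1.filter (· < x)).card + 1 := by
  rw [cone, Finset.filter_insert, if_pos (Fin.succ_pos x),
    Finset.card_insert_of_notMem (by simp [zero_notMem_shift]), card_filter_lt_succ_shift]

theorem sum_shift {M : Type*} [AddCommMonoid M] (t : Face m k) (f : Fin (m + 1) → M) :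
    ∑ x ∈ (shift t).1, f x = ∑ x ∈ t.1, f x.succ :=
  Finset.sum_map _ _ _

theorem sum_cone {M : Type*} [AddCommMonoid M] (t : Face m k) (f : Fin (m + 1) → M) :
    ∑ x ∈ (cone t).1, f x = f 0 + ∑ x ∈ t.1, f x.succ := by
  rw [cone, Finset.sum_insert (zero_notMem_shift t), sum_shift]

theorem simplexBdry_shift_shift (s : Face m k) (t : Face m (k + 1)) :
    simplexBdry (m + 1) k (shift s) (shift t) = simplexBdry m k s t := by
  simp only [simplexBdry, sum_shift, erase_succ_shift, card_filter_lt_succ_shift]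
  simp only [shift, Finset.map_inj]

theorem simplexBdry_cone_shift (s : Face m k) (t : Face m (k + 2)) :
    simplexBdry (m + 1) (k + 1) (cone s) (shift t) = 0 := by
  refine Finset.sum_eq_zero fun x _ => if_neg fun h => ?_
  exact zero_notMem_shift t (Finset.mem_of_mem_erase (h ▸ zero_mem_cone s))

theorem simplexBdry_shift_cone (s t : Face m k) :
    simplexBdry (m + 1) k (shift s) (cone t) = (1 : Matrix (Face m k) (Face m k) ℤ) s t := by
  have shift_ne (x : Fin m) : (shift s).1 ≠ (cone t).1.erase x.succ := fun h =>
    zero_notMem_shift s (h ▸ by simp [erase_succ_cone])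
  simp [simplexBdry, sum_cone, shift_ne, erase_zero_cone, one_apply, Subtype.val_inj,
    shift_injective.eq_iff]

-- Below every vertex of a cone other than its apex there is one more vertex, hence the sign.
theorem simplexBdry_cone_cone (s : Face m k) (t : Face m (k + 1)) :
    simplexBdry (m + 1) (k + 1) (cone s) (cone t) = -simplexBdry m k s t := by
  have cone_ne : (cone s).1 ≠ (cone t).1.erase 0 := fun h =>
    Finset.notMem_erase 0 _ (h ▸ zero_mem_cone s)
  simp only [simplexBdry, sum_cone, if_neg cone_ne, erase_succ_cone, card_filter_lt_succ_cone,
    pow_succ, mul_neg_one, zero_add, ← Finset.sum_neg_distrib]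
  simp only [cone, shift, insert_zero_map_succEmb_inj, neg_ite, neg_zero]

end BoundaryBlocks

/-- The boundary matrix of the simplex on `m + 1` vertices with its rows restricted to the faces
that avoid the vertex `0`. -/
def reducedBdry (m k : ℕ) : Matrix (Face m k) (Face (m + 1) (k + 1)) ℤ :=
  (simplexBdry (m + 1) k).submatrix shift id

theorem reducedBdry_eq_fromCols (m k : ℕ) :
    reducedBdry m k = (fromCols 1 (simplexBdry m k)).submatrix id (coneSumShift m k).symm := by
  have blocks : (reducedBdry m k).submatrix id (coneSumShift m k) =
      fromCols 1 (simplexBdry m k) := by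
    ext s (t | t)
    · exact simplexBdry_shift_cone s t
    · exact simplexBdry_shift_shift s t
  simp [← blocks]

theorem simplexBdry_succ_zero (m : ℕ) :
    simplexBdry (m + 1) 0 = (fromCols 1 (simplexBdry m 0)).submatrix
      (shiftEmpty m).symm (coneSumShift m 0).symm := by
  have rows : (simplexBdry (m + 1) 0).submatrix (shiftEmpty m) id = reducedBdry m 0 := rfl
  simpa using congrArg (submatrix · (shiftEmpty m).symm id)
    (rows.trans (reducedBdry_eq_fromCols m 0))

theorem simplexBdry_succ_succ (m k : ℕ) :
    simplexBdry (m + 1) (k + 1) =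
      (fromBlocks (-simplexBdry m k) 0 1 (simplexBdry m (k + 1))).submatrix
        (coneSumShift m k).symm (coneSumShift m (k + 1)).symm := by
  have blocks : (simplexBdry (m + 1) (k + 1)).submatrix
      (coneSumShift m k) (coneSumShift m (k + 1)) =
      fromBlocks (-simplexBdry m k) 0 1 (simplexBdry m (k + 1)) := by
    ext (s | s) (t | t)
    · exact simplexBdry_cone_cone s t
    · exact simplexBdry_cone_shift s t
    · exact simplexBdry_shift_cone s t
    · exact simplexBdry_shift_shift s t
  simp [← blocks]

theorem simplexBdry_mul_simplexBdry_succ (m k : ℕ) :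
    simplexBdry m k * simplexBdry m (k + 1) = 0 := by
  induction m generalizing k with
  | zero => ext s t; exact isEmptyElim t
  | succ m ih =>
    cases k with
    | zero =>
      rw [simplexBdry_succ_zero, simplexBdry_succ_succ, submatrix_mul_equiv,
        fromCols_mul_fromBlocks]
      simp [ih]
    | succ k =>
      rw [simplexBdry_succ_succ, simplexBdry_succ_succ, submatrix_mul_equiv, fromBlocks_multiply]
      simp [ih]

theorem submatrix_add_submatrix_eq_smul_one {l n R : Type*} [DecidableEq l] [DecidableEq n]
    [Semiring R] (e : l ≃ n) {X Y : Matrix n n R} {c : R} (h : X + Y = c • 1) :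
    X.submatrix e e + Y.submatrix e e = c • 1 := by
  rw [← submatrix_one_equiv e]
  exact congrArg (submatrix · e e) h

theorem simplexBdry_zero_mul_transpose (m : ℕ) :
    simplexBdry m 0 * (simplexBdry m 0)ᵀ = (m : ℤ) • 1 := by
  induction m with
  | zero => ext; simp [mul_apply]
  | succ m ih =>
    rw [simplexBdry_succ_zero, transpose_submatrix, submatrix_mul_equiv, transpose_fromCols,
      fromCols_mul_fromRows, ih, transpose_one, mul_one]
    have succ_smul_one : 1 + (m : ℤ) • (1 : Matrix (Face m 0) (Face m 0) ℤ) =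
        ((m + 1 : ℕ) : ℤ) • 1 := by rw [Nat.cast_succ, add_smul, one_smul, add_comm]
    rw [succ_smul_one, submatrix_smul, Pi.smul_apply, Pi.smul_apply, submatrix_one_equiv]

theorem simplexBdry_laplacian (m k : ℕ) :
    (simplexBdry m k)ᵀ * simplexBdry m k + simplexBdry m (k + 1) * (simplexBdry m (k + 1))ᵀ =
      (m : ℤ) • 1 := by
  induction m generalizing k with
  | zero => ext s t; exact isEmptyElim t
  | succ m ih =>
    have succ_smul_one (j : ℕ) : ((m + 1 : ℕ) : ℤ) • (1 : Matrix (Face m j) (Face m j) ℤ) =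
        (m : ℤ) • 1 + 1 := by rw [Nat.cast_succ, add_smul, one_smul]
    cases k with
    | zero =>
      rw [simplexBdry_succ_zero, simplexBdry_succ_succ]
      simp only [transpose_submatrix, submatrix_mul_equiv, transpose_fromCols,
        fromRows_mul_fromCols, fromBlocks_transpose, fromBlocks_multiply]
      refine submatrix_add_submatrix_eq_smul_one _ ?_
      rw [fromBlocks_add, ← fromBlocks_one, fromBlocks_smul, succ_smul_one, succ_smul_one, ← ih,
        ← simplexBdry_zero_mul_transpose]
      congr 1 <;> simp <;> abel
    | succ k =>
      rw [simplexBdry_succ_succ, simplexBdry_succ_succ]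
      simp only [transpose_submatrix, submatrix_mul_equiv, fromBlocks_transpose,
        fromBlocks_multiply]
      refine submatrix_add_submatrix_eq_smul_one _ ?_
      rw [fromBlocks_add, ← fromBlocks_one, fromBlocks_smul, succ_smul_one, succ_smul_one, ← ih,
        ← ih]
      congr 1 <;> simp <;> abel

theorem det_one_add_simplexBdry_mul_det_one_add_simplexBdry_succ (m k : ℕ) :
    (1 + simplexBdry m k * (simplexBdry m k)ᵀ).det *
      (1 + simplexBdry m (k + 1) * (simplexBdry m (k + 1))ᵀ).det =
    ((m : ℤ) + 1) ^ m.choose (k + 1) := by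
  have down_mul_up : (simplexBdry m k)ᵀ * simplexBdry m k *
      (simplexBdry m (k + 1) * (simplexBdry m (k + 1))ᵀ) = 0 := by
    rw [Matrix.mul_assoc, ← Matrix.mul_assoc (simplexBdry m k), simplexBdry_mul_simplexBdry_succ,
      Matrix.zero_mul, Matrix.mul_zero]
  have factorization : (1 + (simplexBdry m k)ᵀ * simplexBdry m k) *
      (1 + simplexBdry m (k + 1) * (simplexBdry m (k + 1))ᵀ) = ((m : ℤ) + 1) • 1 := by
    rw [add_smul, ← simplexBdry_laplacian m k, add_mul, mul_add, mul_add, down_mul_up]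
    simp only [one_mul, mul_one, add_zero, one_smul]
    abel
  rw [det_one_add_mul_comm, ← det_mul, factorization, det_smul, det_one, mul_one,
    Fintype.card_finset_len, Fintype.card_fin]

theorem det_one_add_simplexBdry_mul_transpose (m k : ℕ) :
    (1 + simplexBdry (m + 1) k * (simplexBdry (m + 1) k)ᵀ).det = ((m : ℤ) + 2) ^ m.choose k := by
  induction k with
  | zero =>
    have scalar : (1 : Matrix (Face (m + 1) 0) (Face (m + 1) 0) ℤ) + ((m + 1 : ℕ) : ℤ) • 1 =
        ((m : ℤ) + 2) • 1 := by
      push_cast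
      module
    rw [simplexBdry_zero_mul_transpose, scalar, det_smul, det_one, mul_one,
      Fintype.card_finset_len, Nat.choose_zero_right, Nat.choose_zero_right]
  | succ k ih =>
    have recursion := det_one_add_simplexBdry_mul_det_one_add_simplexBdry_succ (m + 1) k
    rw [ih, Nat.choose_succ_succ, pow_add] at recursion
    have base_eq : ((m + 1 : ℕ) : ℤ) + 1 = m + 2 := by push_cast; ring
    rw [base_eq] at recursion
    exact mul_left_cancel₀ (pow_ne_zero _ (by positivity)) recursion

theorem det_reducedBdry_mul_transpose (m k : ℕ) :
    (reducedBdry (m + 1) k * (reducedBdry (m + 1) k)ᵀ).det = ((m : ℤ) + 2) ^ m.choose k := by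
  rw [← det_one_add_simplexBdry_mul_transpose, reducedBdry_eq_fromCols, transpose_submatrix,
    submatrix_mul_equiv, transpose_fromCols, fromCols_mul_fromRows, transpose_one, mul_one,
    submatrix_id_id]

section RestrictedCycles

variable (m e : ℕ)

theorem reducedBdry_mulVec (z : Face (m + 1) (e + 1) → ℤ) :
    reducedBdry m e *ᵥ z = z ∘ cone + simplexBdry m e *ᵥ (z ∘ shift) := by
  rw [reducedBdry_eq_fromCols, submatrix_mulVec_equiv, fromCols_mulVec, one_mulVec]
  rfl

/-- The restriction of the integral cycles to the faces that avoid the vertex `0`. -/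
def restrictCycle : LinearMap.ker (simplexBdry (m + 1) e).mulVecLin →ₗ[ℤ] (Face m (e + 1) → ℤ) :=
  (LinearMap.funLeft ℤ ℤ shift).comp (Submodule.subtype _)

theorem restrictCycle_injective : Function.Injective (restrictCycle m e) := by
  rw [injective_iff_map_eq_zero]
  rintro ⟨z, hz⟩ hzero
  have shift_zero : z ∘ shift = 0 := hzero
  have cone_zero : z ∘ cone = 0 := by
    have reduced_zero : reducedBdry m e *ᵥ z = 0 := funext fun s => congrFun hz (shift s)
    rwa [reducedBdry_mulVec, shift_zero, mulVec_zero, add_zero] at reduced_zero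
  ext u
  obtain ⟨s | s, rfl⟩ := (coneSumShift m e).surjective u
  · exact congrFun cone_zero s
  · exact congrFun shift_zero s

/-- The columns of `∂_{e+1}` as integral cycles. -/
def boundaryCycle (τ : Face (m + 1) (e + 2)) :
    LinearMap.ker (simplexBdry (m + 1) e).mulVecLin :=
  ⟨(simplexBdry (m + 1) (e + 1)).col τ,
    funext fun s => congrFun₂ (simplexBdry_mul_simplexBdry_succ (m + 1) e) s τ⟩

theorem restrictCycle_boundaryCycle_cone (s : Face m (e + 1)) :
    restrictCycle m e (boundaryCycle m e (cone s)) = Pi.single s 1 := by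
  ext t
  rw [Pi.single_apply, ← one_apply]
  exact simplexBdry_shift_cone t s

theorem restrictCycle_surjective : Function.Surjective (restrictCycle m e) := by
  intro w
  refine ⟨∑ s, w s • boundaryCycle m e (cone s), ?_⟩
  simp only [map_sum, map_smul, restrictCycle_boundaryCycle_cone]
  exact (pi_eq_sum_univ' w).symm

/-- An integral cycle is determined by its values on the faces that avoid `0`, and these values
are arbitrary. -/
noncomputable def restrictCycleEquiv :
    LinearMap.ker (simplexBdry (m + 1) e).mulVecLin ≃ₗ[ℤ] (Face m (e + 1) → ℤ) :=
  .ofBijective (restrictCycle m e) ⟨restrictCycle_injective m e, restrictCycle_surjective m e⟩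

variable {m e}

theorem comap_subtype_span_columns (T : Set (Face (m + 1) (e + 2))) :
    (Submodule.span ℤ ((simplexBdry (m + 1) (e + 1)).col '' T)).comap
        (LinearMap.ker (simplexBdry (m + 1) e).mulVecLin).subtype =
      Submodule.span ℤ (boundaryCycle m e '' T) := by
  have map_span : (Submodule.span ℤ (boundaryCycle m e '' T)).map (Submodule.subtype _) =
      Submodule.span ℤ ((simplexBdry (m + 1) (e + 1)).col '' T) := by
    rw [Submodule.map_span, ← Set.image_comp]
    rfl
  rw [← map_span, Submodule.comap_map_eq_of_injective (Submodule.injective_subtype _)]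

/-- Restriction to the faces avoiding `0` identifies `H(T)` with the cokernel of the columns of the
reduced boundary matrix indexed by `T`. -/
noncomputable def kalaiHEquiv (T : Finset (Face (m + 1) (e + 2))) :
    KalaiH (m + 1) e T ≃
      (Face m (e + 1) → ℤ) ⧸ Submodule.span ℤ ((reducedBdry m (e + 1)).col '' (T : Set _)) :=
  (Submodule.Quotient.equiv _ _ (restrictCycleEquiv m e) <|
    (congrArg (Submodule.map _) (comap_subtype_span_columns _)).trans <| by
      rw [Submodule.map_span, ← Set.image_comp]
      rfl).toEquiv

theorem linearIndependent_columns_iff {ι : Type*} (f : ι → Face (m + 1) (e + 2)) :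
    LinearIndependent ℚ (fun i σ => (simplexBdry (m + 1) (e + 1) σ (f i) : ℚ)) ↔
      LinearIndependent ℤ fun i => (reducedBdry m (e + 1)).col (f i) := by
  calc
    _ ↔ LinearIndependent ℤ fun i => (simplexBdry (m + 1) (e + 1)).col (f i) :=
      linearIndependent_algebraMap_comp_iff
    _ ↔ LinearIndependent ℤ (boundaryCycle m e ∘ f) :=
      LinearMap.linearIndependent_iff (v := boundaryCycle m e ∘ f)
        (LinearMap.ker (simplexBdry (m + 1) e).mulVecLin).subtype (Submodule.ker_subtype _)
    _ ↔ LinearIndependent ℤ (restrictCycle m e ∘ boundaryCycle m e ∘ f) :=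
      (LinearMap.linearIndependent_iff (v := boundaryCycle m e ∘ f) (restrictCycle m e)
        (LinearMap.ker_eq_bot.2 (restrictCycle_injective m e))).symm

end RestrictedCycles

theorem linearIndependent_rows_iff_det_ne_zero {n R : Type*} [Fintype n] [DecidableEq n]
    [CommRing R] [IsDomain R] {M : Matrix n n R} :
    LinearIndependent R M.row ↔ M.det ≠ 0 := by
  refine ⟨fun h hdet => ?_, linearIndependent_rows_of_det_ne_zero⟩
  obtain ⟨v, hv, hvM⟩ := exists_vecMul_eq_zero_iff.2 hdet
  exact hv (vecMul_injective_iff.2 h (hvM.trans (zero_vecMul M).symm))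

theorem natCard_quotient_span_rows {r : Type*} [Fintype r] [DecidableEq r] {M : Matrix r r ℤ}
    (hM : M.det ≠ 0) :
    Nat.card ((r → ℤ) ⧸ Submodule.span ℤ (Set.range M.row)) = M.det.natAbs := by
  have rows_independent : LinearIndependent ℤ M.row := linearIndependent_rows_of_det_ne_zero hM
  rw [← Submodule.natAbs_det_basis_change (Pi.basisFun ℤ r) _ (.span rows_independent),
    Pi.basisFun_det]
  congr 1
  change det _ = _
  congr 1
  ext i j
  exact congrFun (congrArg Subtype.val (Module.Basis.span_apply rows_independent i)) j

section Enumerated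

variable {m e : ℕ} {T : Finset (Face (m + 1) (e + 2))} (f : Face m (e + 1) ≃ T)

theorem isSST_iff_det_ne_zero :
    IsSST (m + 1) e T ↔ ((reducedBdry m (e + 1)).submatrix id fun i => (f i).1).det ≠ 0 := by
  have card_eq : T.card = (m + 1 - 1).choose (e + 1) := by
    simpa [Fintype.card_finset_len] using (Fintype.card_congr f).symm
  rw [IsSST, and_iff_right card_eq, linearIndependent_columns_iff, ← det_transpose,
    ← linearIndependent_rows_iff_det_ne_zero]
  exact (linearIndependent_equiv f).symm

theorem natCard_kalaiH (hT : IsSST (m + 1) e T) :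
    Nat.card (KalaiH (m + 1) e T) =
      ((reducedBdry m (e + 1)).submatrix id fun i => (f i).1).det.natAbs := by
  have columns_eq : (reducedBdry m (e + 1)).col '' T =
      Set.range ((reducedBdry m (e + 1)).submatrix id fun i => (f i).1)ᵀ.row := by
    rw [← Subtype.range_coe (s := (T : Set (Face (m + 1) (e + 2)))), ← Set.range_comp]
    exact (f.surjective.range_comp _).symm
  rw [Nat.card_congr (kalaiHEquiv T), columns_eq, ← det_transpose,
    natCard_quotient_span_rows (by rwa [det_transpose, ← isSST_iff_det_ne_zero])]

theorem indicator_sq_natCard_kalaiH :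
    (({T | IsSST (m + 1) e T}.indicator (fun T => Nat.card (KalaiH (m + 1) e T) ^ 2) T : ℕ) : ℤ) =
      ((reducedBdry m (e + 1)).submatrix id fun i => (f i).1).det *
        ((reducedBdry m (e + 1))ᵀ.submatrix (fun i => (f i).1) id).det := by
  rw [← transpose_submatrix, det_transpose, ← sq]
  by_cases hT : IsSST (m + 1) e T
  · rw [Set.indicator_of_mem (by exact hT), natCard_kalaiH f hT, Nat.cast_pow,
      Int.natCast_natAbs, sq_abs]
  · have det_eq_zero := not_not.1 (mt (isSST_iff_det_ne_zero f).2 hT)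
    rw [Set.indicator_of_notMem (by exact hT), det_eq_zero, Nat.cast_zero, sq, zero_mul]

end Enumerated

theorem card_eq_of_isSST {m e : ℕ} {T : Finset (Face (m + 1) (e + 2))} (hT : IsSST (m + 1) e T) :
    T.card = Fintype.card (Face m (e + 1)) := by
  simpa [Fintype.card_finset_len] using hT.1

theorem finite_kalaiH {m e : ℕ} {T : Finset (Face (m + 1) (e + 2))} (hT : IsSST (m + 1) e T) :
    Finite (KalaiH (m + 1) e T) := by
  let f : Face m (e + 1) ≃ T :=
    Fintype.equivOfCardEq (by rw [Fintype.card_coe, card_eq_of_isSST hT])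
  refine Nat.finite_of_card_ne_zero ?_
  rw [natCard_kalaiH f hT]
  exact Int.natAbs_ne_zero.2 ((isSST_iff_det_ne_zero f).1 hT)

theorem sum_sq_natCard_kalaiH_eq_det (m e : ℕ) :
    ((∑ᶠ T ∈ {T | IsSST (m + 1) e T}, Nat.card (KalaiH (m + 1) e T) ^ 2 : ℕ) : ℤ) =
      (reducedBdry m (e + 1) * (reducedBdry m (e + 1))ᵀ).det := by
  let f (T : {T : Finset (Face (m + 1) (e + 2)) // T.card = Fintype.card (Face m (e + 1))}) :
      Face m (e + 1) ≃ T.1 := Fintype.equivOfCardEq (by rw [Fintype.card_coe, T.2])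
  rw [det_mul_eq_sum_det_mul_det _ _ f, finsum_mem_def, finsum_eq_sum_of_fintype, Nat.cast_sum]
  refine (Fintype.sum_of_injective _ Subtype.val_injective _ _ (fun T hT => ?_) fun T => ?_).symm
  · rw [Set.indicator_of_notMem, Nat.cast_zero]
    exact fun hSST => hT ⟨⟨T, card_eq_of_isSST hSST⟩, rfl⟩
  · exact (indicator_sq_natCard_kalaiH (f T)).symm

end Kalai

/-- **Kalai's formula.**  For `2 ≤ n` and `1 ≤ d ≤ n - 1` (here `d = e + 1`): every
simplicial spanning tree `T` of `Δ_{n,d}` has finite `H(T) = ker_ℤ ∂_{d-1} / im_ℤ(∂_d|_T)`,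
and `∑_T |H(T)|² = n^C(n-2,d)`. -/
theorem kalai_formula (n e : ℕ) (hn : 2 ≤ n) (hd : e + 1 ≤ n - 1) :
    (∀ T, IsSST n e T → Finite (KalaiH n e T)) ∧
    (∑ᶠ T ∈ {T | IsSST n e T}, (Nat.card (KalaiH n e T)) ^ 2) =
      n ^ Nat.choose (n - 2) (e + 1) := by
  obtain ⟨m, rfl⟩ := Nat.exists_eq_add_of_le' hn
  refine ⟨fun T hT => Kalai.finite_kalaiH hT, ?_⟩
  have sum_eq_det := Kalai.sum_sq_natCard_kalaiH_eq_det (m + 1) e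
  rw [Kalai.det_reducedBdry_mul_transpose] at sum_eq_det
  exact_mod_cast sum_eq_det
end

section
/- Fix integers n ≥ 2 and 1 ≤ d ≤ n−1, and let x_1,…,x_n be indeterminates. Call a set T ⊆ F_d a simplicial spanning tree of the d-skeleton Δ_{n,d} if |T| = C(n−1,d) and the columns of ∂_d indexed by T are linearly independent over ℚ, and let H(T) := ker_ℤ(∂_{d−1}) / (the subgroup generated by the columns of ∂_d indexed by T), a finite group. Then, in ℤ[x_1,…,x_n], the sum over all simplicial spanning trees T of |H(T)|² · ∏_{τ∈T} ∏_{i∈τ} x_i equals (x_1·x_2⋯x_n)^{C(n−2,d−1)} · (x_1+x_2+⋯+x_n)^{C(n−2,d)} (Kalai's weighted formula). -/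
open Matrix MvPolynomial

/-!
By Cauchy–Binet, `∑_T det(∂_T)² ∏_{τ ∈ T} x^τ` is the determinant of the weighted Laplacian
`∂ W ∂ᵀ` restricted to the faces avoiding a fixed vertex `v`, where `∂_T` denotes the square
submatrix of `∂_d` on those rows and the columns in `T`.

Coning at `v` identifies the integral cycles with the functions on the faces avoiding `v`.
Hence `T` is a simplicial spanning tree iff `det ∂_T ≠ 0`, and then `|H(T)| = |det ∂_T|`.

Dividing row `σ` of the reduced Laplacian by `x^σ` leaves `x_v + L_d`, where `L_k` is the
up-Laplacian on the `k`-subsets of the other vertices formed from the Koszul differential with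
weights `x` and the unweighted coboundary.  The down-Laplacian `D_k` on the `(k+1)`-subsets
satisfies `D_k L_{k+1} = 0` and, by the Clifford relation, `D_k + L_{k+1} = ∑_{i ≠ v} x_i`, so the
characteristic polynomials of `D_k` and `L_{k+1}` determine each other.  Those of `L_k` and `D_k`
differ by a power of the variable, so all of them follow by induction on `k`.
-/

section CauchyBinet

variable {m ι R : Type*} [Fintype m] [DecidableEq m] [CommRing R]

theorem det_submatrix_id_eq_zero_of_not_injective (A : Matrix m ι R) {p : m → ι}
    (hp : ¬ p.Injective) : (A.submatrix id p).det = 0 := by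
  obtain ⟨i, j, hij, hne⟩ := Function.not_injective_iff.1 hp
  exact det_zero_of_column_eq hne fun k => by simp [hij]

variable [Fintype ι]

theorem det_mul_eq_sum_det_submatrix_mul_prod (A : Matrix m ι R) (B : Matrix ι m R) :
    (A * B).det = ∑ p : m → ι, (A.submatrix id p).det * ∏ i, B (p i) i := by
  classical
  simp only [det_apply', mul_apply, Finset.prod_univ_sum, Finset.mul_sum,
    Fintype.piFinset_univ, Finset.sum_mul]
  rw [Finset.sum_comm]
  refine Finset.sum_congr rfl fun p _ => Finset.sum_congr rfl fun π _ => ?_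
  simp [Finset.prod_mul_distrib, mul_assoc]

theorem det_mul_eq_sum_injective [DecidableEq ι] (A : Matrix m ι R) (B : Matrix ι m R) :
    (A * B).det = ∑ p : m → ι with p.Injective, (A.submatrix id p).det * ∏ i, B (p i) i := by
  rw [det_mul_eq_sum_det_submatrix_mul_prod, Finset.sum_filter_of_ne]
  intro p _ hp
  contrapose! hp
  rw [det_submatrix_id_eq_zero_of_not_injective A hp, zero_mul]

/-- The Cauchy–Binet formula.  The summand for `T` is the determinant of an `m × m` matrix, so no
enumeration of `T` by `m` has to be chosen. -/
theorem det_mul_eq_sum_powersetCard (A : Matrix m ι R) (B : Matrix ι m R) :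
    (A * B).det = ∑ T ∈ Finset.powersetCard (Fintype.card m) Finset.univ,
      (A.submatrix id (Subtype.val : T → ι) * B.submatrix (Subtype.val : T → ι) id).det := by
  classical
  have image_mem : ∀ p ∈ ({p | p.Injective} : Finset (m → ι)),
      Finset.univ.image p ∈ Finset.powersetCard (Fintype.card m) Finset.univ := fun p hp => by
    simp [Finset.card_image_of_injective _ (Finset.mem_filter.1 hp).2]
  rw [det_mul_eq_sum_injective, ← Finset.sum_fiberwise_of_maps_to image_mem]
  refine Finset.sum_congr rfl fun T hT => ?_
  rw [det_mul_eq_sum_injective]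
  symm
  refine Finset.sum_bij (fun p _ i => (p i : ι)) (fun p hp => ?_) (fun p _ q _ hpq => ?_)
    (fun p hp => ?_) fun p _ => rfl
  · have hinj : Function.Injective fun i => (p i : ι) :=
      Subtype.val_injective.comp (Finset.mem_filter.1 hp).2
    have himage : Finset.univ.image (fun i => (p i : ι)) = T :=
      Finset.eq_of_subset_of_card_le (Finset.image_subset_iff.2 fun i _ => (p i).2) <| by
        simp [Finset.card_image_of_injective _ hinj, (Finset.mem_powersetCard.1 hT).2]
    simp [hinj, himage]
  · exact funext fun i => Subtype.ext (congrFun hpq i)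
  · obtain ⟨hinj, rfl⟩ : p.Injective ∧ Finset.univ.image p = T := by simpa using hp
    refine ⟨fun i => ⟨p i, Finset.mem_image_of_mem p (Finset.mem_univ i)⟩, ?_, rfl⟩
    exact Finset.mem_filter.2 ⟨Finset.mem_univ _, fun i j hij => hinj (congrArg Subtype.val hij)⟩

theorem det_submatrix_mul_diagonal_mul_transpose [DecidableEq ι] (A : Matrix m ι R) (w : ι → R)
    {T : Finset ι} (E : m ≃ T) :
    ((A * diagonal w).submatrix id (Subtype.val : T → ι) *
        Aᵀ.submatrix (Subtype.val : T → ι) id).det =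
      (A.submatrix id fun i => (E i : ι)).det ^ 2 * ∏ τ ∈ T, w τ := by
  have hfactor : (A * diagonal w).submatrix id (Subtype.val : T → ι) *
        Aᵀ.submatrix (Subtype.val : T → ι) id =
      A.submatrix id (fun i => (E i : ι)) * diagonal (fun i => w (E i)) *
        (A.submatrix id fun i => (E i : ι))ᵀ := by
    ext i j
    rw [mul_apply, mul_apply]
    simp only [mul_diagonal, submatrix_apply, transpose_apply, id_eq]
    exact (Equiv.sum_comp E fun τ : T => A i τ * w τ * A j τ).symm
  have hprod : ∏ i, w (E i) = ∏ τ ∈ T, w τ := by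
    rw [Equiv.prod_comp E fun τ : T => w τ, Finset.prod_coe_sort]
  rw [hfactor, det_mul, det_mul, det_diagonal, det_transpose, hprod]
  ring

end CauchyBinet

section LinearAlgebra

variable {m R : Type*} [Fintype m] [DecidableEq m] [CommRing R]

theorem charpoly_mul_charpoly_of_mul_eq_zero_of_add_eq_smul_one {P Q : Matrix m m R} {s : R}
    (hmul : P * Q = 0) (hadd : P + Q = s • 1) :
    P.charpoly * Q.charpoly =
      (Polynomial.X * (Polynomial.X - Polynomial.C s)) ^ Fintype.card m := by
  have hchar : P.charmatrix * Q.charmatrix =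
      (Polynomial.X * (Polynomial.X - Polynomial.C s)) • (1 : Matrix m m (Polynomial R)) := by
    have hmul' := congrArg Polynomial.C.mapMatrix hmul
    have hadd' := congrArg Polynomial.C.mapMatrix hadd
    have hcomm := (scalar_commute (n := m) (Polynomial.X : Polynomial R) (Commute.all _)
      (Polynomial.C.mapMatrix P)).eq
    have hsmul : Polynomial.C.mapMatrix (s • (1 : Matrix m m R)) =
        scalar m (Polynomial.C s) := by
      ext i j; simp [Matrix.one_apply, diagonal_apply, apply_ite Polynomial.C]
    rw [map_mul, map_zero] at hmul'
    rw [map_add, hsmul] at hadd'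
    rw [charmatrix, charmatrix, sub_mul, mul_sub, mul_sub, hmul', ← hcomm, sub_zero, sub_sub,
      ← mul_add, add_comm, hadd', ← mul_sub, ← map_sub, ← map_mul,
      smul_one_eq_diagonal, scalar_apply]
  rw [charpoly, charpoly, ← det_mul, hchar, det_smul, det_one, mul_one]

theorem card_quotient_range_mulVecLin (A : Matrix m m ℤ) (hA : A.det ≠ 0) :
    Nat.card ((m → ℤ) ⧸ LinearMap.range A.mulVecLin) = A.det.natAbs := by
  let E := LinearEquiv.ofInjective A.mulVecLin (mulVec_injective_of_det_ne_zero hA)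
  have hE : (LinearMap.range A.mulVecLin).subtype ∘ₗ
      AddMonoidHom.toIntLinearMap (E : (m → ℤ) →+ LinearMap.range A.mulVecLin) = toLin' A := by
    ext; rfl
  rw [← Submodule.natAbs_det_equiv (LinearMap.range A.mulVecLin) E, hE, LinearMap.det_toLin']

theorem linearIndependent_intCast_iff {ι κ : Type*} (c : ι → κ → ℤ) :
    LinearIndependent ℚ (fun i j => (c i j : ℚ)) ↔ LinearIndependent ℤ c := by
  let cast : (κ → ℤ) →ₗ[ℤ] κ → ℚ := (Algebra.linearMap ℤ ℚ).compLeft κ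
  have hker : LinearMap.ker cast = ⊥ :=
    LinearMap.ker_eq_bot.2 Int.cast_injective.comp_left
  rw [← LinearIndependent.iff_fractionRing ℤ ℚ]
  exact cast.linearIndependent_iff hker

end LinearAlgebra

section Koszul

open Finset

variable {α R : Type*} [LinearOrder α] [CommRing R]

/-- The incidence sign of the vertex `x` in the face `σ ∪ {x}`: `-1` to the number of vertices of
`σ` that precede `x`.  It does not depend on whether `x ∈ σ`. -/
def faceSign (x : α) (σ : Finset α) : R :=
  (-1) ^ #{y ∈ σ | y < x}

/-- The Koszul differential with weights `a` on functions on finite subsets of `S`: the simplicial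
boundary of a chain, each face being multiplied by the weight of the removed vertex. -/
def weightedBdry (S : Finset α) (a : α → R) (f : Finset α → R) (σ : Finset α) : R :=
  ∑ x ∈ S \ σ, a x * faceSign x σ * f (insert x σ)

/-- The simplicial coboundary with weights `b`: exterior multiplication by `∑ x, b x • x`. -/
def weightedCobdry (b : α → R) (f : Finset α → R) (τ : Finset α) : R :=
  ∑ x ∈ τ, b x * faceSign x τ * f (τ.erase x)

theorem faceSign_mul_self (x : α) (σ : Finset α) : (faceSign x σ * faceSign x σ : R) = 1 := by
  simp [faceSign, ← mul_pow]

theorem faceSign_insert_self (x : α) (σ : Finset α) :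
    (faceSign x (insert x σ) : R) = faceSign x σ := by
  simp [faceSign, filter_insert]

theorem faceSign_erase_self (x : α) (σ : Finset α) :
    (faceSign x (σ.erase x) : R) = faceSign x σ := by
  have hfilter : {y ∈ σ.erase x | y < x} = {y ∈ σ | y < x} := by
    ext y
    simp only [mem_filter, mem_erase]
    exact ⟨fun h => ⟨h.1.2, h.2⟩, fun h => ⟨⟨h.2.ne, h.1⟩, h.2⟩⟩
  rw [faceSign, hfilter, faceSign]

theorem faceSign_insert {x z : α} {σ : Finset α} (hx : x ∉ σ) :
    (faceSign z (insert x σ) : R) = (if x < z then -1 else 1) * faceSign z σ := by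
  unfold faceSign
  rw [filter_insert]
  split_ifs
  · rw [card_insert_of_notMem (by simp [hx]), pow_succ']
  · rw [one_mul]

theorem faceSign_mul_faceSign_insert {x z : α} {σ : Finset α} (hx : x ∉ σ) (hz : z ∉ σ)
    (hxz : x ≠ z) :
    (faceSign x σ * faceSign z (insert x σ) : R) = -(faceSign z σ * faceSign x (insert z σ)) := by
  rw [faceSign_insert hx, faceSign_insert hz]
  rcases hxz.lt_or_gt with h | h <;> simp [h, h.not_gt] <;> ring

theorem faceSign_mul_faceSign_insert_of_mem {x z : α} {σ : Finset α} (hx : x ∉ σ) (hz : z ∈ σ) :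
    (faceSign x σ * faceSign z (insert x σ) : R) =
      -(faceSign z σ * faceSign x (σ.erase z)) := by
  have hxz : x ≠ z := fun h => hx (h ▸ hz)
  have hσ : (faceSign x σ : R) = (if z < x then -1 else 1) * faceSign x (σ.erase z) := by
    rw [← faceSign_insert (notMem_erase z σ), insert_erase hz]
  rw [faceSign_insert hx, hσ]
  rcases hxz.lt_or_gt with h | h <;> simp [h, h.not_gt] <;> ring

theorem weightedBdry_weightedBdry (S : Finset α) (a : α → R) (f : Finset α → R) (σ : Finset α) :
    weightedBdry S a (weightedBdry S a f) σ = 0 := by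
  simp only [weightedBdry, mul_sum]
  rw [sum_sigma']
  refine sum_involution (fun p _ => ⟨p.2, p.1⟩) ?_ ?_ ?_ fun _ _ => rfl
  · rintro ⟨x, z⟩ hp
    simp only [mem_sigma, mem_sdiff, mem_insert, not_or] at hp
    obtain ⟨⟨-, hx⟩, -, hzx, hz⟩ := hp
    rw [insert_comm z x σ]
    linear_combination a x * a z * f (insert x (insert z σ)) *
      faceSign_mul_faceSign_insert (R := R) hx hz (Ne.symm hzx)
  · rintro ⟨x, z⟩ hp - heq
    simp only [mem_sigma, mem_sdiff, mem_insert, not_or] at hp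
    exact hp.2.2.1 (congrArg Sigma.fst heq)
  · rintro ⟨x, z⟩ hp
    simp only [mem_sigma, mem_sdiff, mem_insert, not_or] at hp ⊢
    exact ⟨⟨hp.2.1, hp.2.2.2⟩, hp.1.1, Ne.symm hp.2.2.1, hp.1.2⟩

theorem weightedBdry_weightedCobdry (S : Finset α) (a b : α → R) (f : Finset α → R)
    (σ : Finset α) :
    weightedBdry S a (weightedCobdry b f) σ = (∑ x ∈ S \ σ, a x * b x) * f σ +
      ∑ x ∈ S \ σ, ∑ z ∈ σ, a x * b z * (faceSign x σ * faceSign z (insert x σ)) *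
        f ((insert x σ).erase z) := by
  rw [sum_mul, ← sum_add_distrib]
  refine sum_congr rfl fun x hx => ?_
  have hxσ : x ∉ σ := (mem_sdiff.1 hx).2
  rw [weightedCobdry, sum_insert hxσ, erase_insert hxσ, faceSign_insert_self, mul_add, mul_sum]
  congr 1
  · linear_combination a x * b x * f σ * faceSign_mul_self (R := R) x σ
  · exact sum_congr rfl fun z _ => by ring

theorem weightedCobdry_weightedBdry {S σ : Finset α} (hσ : σ ⊆ S) (a b : α → R)
    (f : Finset α → R) :
    weightedCobdry b (weightedBdry S a f) σ = (∑ z ∈ σ, a z * b z) * f σ +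
      ∑ x ∈ S \ σ, ∑ z ∈ σ, a x * b z * (faceSign z σ * faceSign x (σ.erase z)) *
        f (insert x (σ.erase z)) := by
  rw [sum_comm, sum_mul, ← sum_add_distrib]
  refine sum_congr rfl fun z hz => ?_
  have hsdiff : S \ σ.erase z = insert z (S \ σ) := sdiff_erase (hσ hz)
  rw [weightedBdry, hsdiff, sum_insert (by simp [hz]), insert_erase hz, faceSign_erase_self,
    mul_add, mul_sum]
  congr 1
  · linear_combination a z * b z * f σ * faceSign_mul_self (R := R) z σ
  · exact sum_congr rfl fun x _ => by ring

/-- The Clifford relation between contraction by `a` and exterior multiplication by `b`. -/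
theorem weightedBdry_weightedCobdry_add {S σ : Finset α} (hσ : σ ⊆ S) (a b : α → R)
    (f : Finset α → R) :
    weightedBdry S a (weightedCobdry b f) σ + weightedCobdry b (weightedBdry S a f) σ =
      (∑ x ∈ S, a x * b x) * f σ := by
  have hcross : ∀ x ∈ S \ σ, ∀ z ∈ σ,
      a x * b z * (faceSign x σ * faceSign z (insert x σ)) * f ((insert x σ).erase z) =
        -(a x * b z * (faceSign z σ * faceSign x (σ.erase z)) * f (insert x (σ.erase z))) := by
    intro x hx z hz
    have hxσ : x ∉ σ := (mem_sdiff.1 hx).2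
    have hxz : x ≠ z := fun h => hxσ (h ▸ hz)
    rw [erase_insert_of_ne hxz, faceSign_mul_faceSign_insert_of_mem hxσ hz]
    ring
  rw [weightedBdry_weightedCobdry, weightedCobdry_weightedBdry hσ,
    sum_congr rfl fun x hx => sum_congr rfl (hcross x hx), ← sum_sdiff hσ]
  simp only [sum_neg_distrib]
  ring

theorem weightedCobdry_single_one {S σ τ : Finset α} (hτ : τ ⊆ S) (b : α → R) :
    weightedCobdry b (Pi.single σ 1) τ = weightedBdry S b (Pi.single τ 1) σ := by
  simp only [weightedCobdry, weightedBdry, Pi.single_apply, mul_ite, mul_one, mul_zero,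
    ← sum_filter]
  have hfilter : {x ∈ τ | τ.erase x = σ} = {x ∈ S \ σ | insert x σ = τ} := by
    ext x
    simp only [mem_filter, mem_sdiff]
    constructor
    · rintro ⟨hx, rfl⟩
      exact ⟨⟨hτ hx, notMem_erase x τ⟩, insert_erase hx⟩
    · rintro ⟨⟨-, hx⟩, rfl⟩
      exact ⟨mem_insert_self x σ, erase_insert hx⟩
  refine sum_congr hfilter fun x hx => ?_
  rw [← (mem_filter.1 hx).2, faceSign_insert_self]

theorem weightedCobdry_insert {v : α} {σ : Finset α} (hv : v ∉ σ)
    (b : α → R) {f : Finset α → R} (hf : ∀ ρ, v ∈ ρ → f ρ = 0) :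
    weightedCobdry b f (insert v σ) = b v * faceSign v σ * f σ := by
  rw [weightedCobdry, sum_insert hv, erase_insert hv, faceSign_insert_self, add_eq_left]
  refine sum_eq_zero fun x hx => ?_
  have hxv : v ≠ x := fun h => hv (h ▸ hx)
  rw [hf _ (mem_erase.2 ⟨hxv, mem_insert_self v σ⟩), mul_zero]

theorem weightedBdry_univ_weightedCobdry_one [Fintype α] {v : α}
    {σ : Finset α} (hv : v ∉ σ) (a : α → R) {f : Finset α → R} (hf : ∀ ρ, v ∈ ρ → f ρ = 0) :
    weightedBdry univ a (weightedCobdry 1 f) σ =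
      a v * f σ + weightedBdry (univ.erase v) a (weightedCobdry 1 f) σ := by
  have hsdiff : univ \ σ = insert v (univ.erase v \ σ) := by
    rw [← insert_sdiff_of_notMem _ hv, insert_erase (mem_univ v)]
  rw [weightedBdry, hsdiff, sum_insert (by simp), weightedCobdry_insert hv 1 hf, weightedBdry,
    Pi.one_apply]
  linear_combination (a v * f σ) * faceSign_mul_self (R := R) v σ

theorem weightedBdry_one_prod_mul (S : Finset α) (x : α → R)
    (f : Finset α → R) (σ : Finset α) :
    weightedBdry S 1 (fun τ => (∏ i ∈ τ, x i) * f τ) σ = (∏ i ∈ σ, x i) * weightedBdry S x f σ := by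
  rw [weightedBdry, weightedBdry, mul_sum]
  refine sum_congr rfl fun y hy => ?_
  rw [prod_insert (mem_sdiff.1 hy).2, Pi.one_apply]
  ring

theorem sum_weightedBdry_single_one_mul {S σ : Finset α} {k : ℕ} (hσ : σ ∈ S.powersetCard k)
    (a : α → R) (g : Finset α → R) :
    ∑ τ ∈ S.powersetCard (k + 1), weightedBdry S a (Pi.single τ 1) σ * g τ =
      weightedBdry S a g σ := by
  obtain ⟨hsub, hcard⟩ := mem_powersetCard.1 hσ
  simp only [weightedBdry, sum_mul, Pi.single_apply, mul_ite, mul_one, mul_zero, ite_mul, zero_mul]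
  rw [sum_comm]
  refine sum_congr rfl fun x hx => ?_
  obtain ⟨hxS, hxσ⟩ := mem_sdiff.1 hx
  rw [sum_ite_eq, if_pos]
  exact mem_powersetCard.2 ⟨insert_subset hxS hsub, by rw [card_insert_of_notMem hxσ, hcard]⟩

theorem sum_weightedCobdry_single_one_mul {S τ : Finset α} {k : ℕ}
    (hτ : τ ∈ S.powersetCard (k + 1)) (b : α → R) (g : Finset α → R) :
    ∑ σ ∈ S.powersetCard k, weightedCobdry b (Pi.single σ 1) τ * g σ = weightedCobdry b g τ := by
  obtain ⟨hsub, hcard⟩ := mem_powersetCard.1 hτ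
  simp only [weightedCobdry, sum_mul, Pi.single_apply, mul_ite, mul_one, mul_zero, ite_mul,
    zero_mul]
  rw [sum_comm]
  refine sum_congr rfl fun x hx => ?_
  rw [sum_ite_eq, if_pos]
  exact mem_powersetCard.2 ⟨(erase_subset x τ).trans hsub, by simp [card_erase_of_mem hx, hcard]⟩

variable (S : Finset α) (a : α → R) (k : ℕ)

/-- The matrix of `weightedBdry S a` from `(k + 1)`-subsets to `k`-subsets of `S`. -/
def weightedBdryMatrix : Matrix (S.powersetCard k) (S.powersetCard (k + 1)) R :=
  fun σ τ => weightedBdry S a (Pi.single τ 1) σ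

variable (R) in
/-- The matrix of the unweighted coboundary from `k`-subsets to `(k + 1)`-subsets of `S`. -/
def cobdryMatrix : Matrix (S.powersetCard (k + 1)) (S.powersetCard k) R :=
  fun τ σ => weightedCobdry 1 (Pi.single (σ : Finset α) 1) (τ : Finset α)

variable {S k} in
theorem sum_weightedBdryMatrix_mul (σ : S.powersetCard k) (g : Finset α → R) :
    ∑ τ, weightedBdryMatrix S a k σ τ * g τ = weightedBdry S a g σ :=
  (sum_coe_sort _ _).trans (sum_weightedBdry_single_one_mul σ.2 _ g)

variable {S k} in
theorem sum_cobdryMatrix_mul (τ : S.powersetCard (k + 1)) (g : Finset α → R) :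
    ∑ σ, cobdryMatrix R S k τ σ * g σ = weightedCobdry 1 g τ :=
  (sum_coe_sort _ _).trans (sum_weightedCobdry_single_one_mul τ.2 _ g)

theorem weightedBdryMatrix_mul_weightedBdryMatrix :
    weightedBdryMatrix S a k * weightedBdryMatrix S a (k + 1) = 0 := by
  ext σ ρ
  exact (sum_weightedBdryMatrix_mul a σ (weightedBdry S a (Pi.single ρ 1))).trans
    (weightedBdry_weightedBdry S a _ σ)

/-- The weighted up-Laplacian on the `k`-subsets of `S`. -/
def upLaplacian : Matrix (S.powersetCard k) (S.powersetCard k) R :=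
  weightedBdryMatrix S a k * cobdryMatrix R S k

theorem upLaplacian_apply (σ σ' : S.powersetCard k) :
    upLaplacian S a k σ σ' = weightedBdry S a (weightedCobdry 1 (Pi.single σ' 1)) σ :=
  sum_weightedBdryMatrix_mul a σ (weightedCobdry 1 (Pi.single σ' 1))

/-- The weighted down-Laplacian on the `(k + 1)`-subsets of `S`. -/
def downLaplacian : Matrix (S.powersetCard (k + 1)) (S.powersetCard (k + 1)) R :=
  cobdryMatrix R S k * weightedBdryMatrix S a k

theorem downLaplacian_apply (σ σ' : S.powersetCard (k + 1)) :
    downLaplacian S a k σ σ' = weightedCobdry 1 (weightedBdry S a (Pi.single σ' 1)) σ :=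
  sum_cobdryMatrix_mul σ (weightedBdry S a (Pi.single σ' 1))

theorem downLaplacian_add_upLaplacian :
    downLaplacian S a k + upLaplacian S a (k + 1) = (∑ x ∈ S, a x) • 1 := by
  ext σ σ'
  rw [Matrix.add_apply, downLaplacian_apply, upLaplacian_apply, add_comm,
    weightedBdry_weightedCobdry_add (mem_powersetCard.1 σ.2).1]
  simp [Matrix.one_apply, Pi.single_apply]

theorem downLaplacian_mul_upLaplacian : downLaplacian S a k * upLaplacian S a (k + 1) = 0 := by
  rw [downLaplacian, upLaplacian, Matrix.mul_assoc, ← Matrix.mul_assoc (weightedBdryMatrix S a k),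
    weightedBdryMatrix_mul_weightedBdryMatrix, Matrix.zero_mul, Matrix.mul_zero]

theorem X_pow_mul_charpoly_upLaplacian :
    Polynomial.X ^ (#S).choose (k + 1) * (upLaplacian S a k).charpoly =
      Polynomial.X ^ (#S).choose k * (downLaplacian S a k).charpoly := by
  simpa [upLaplacian, downLaplacian] using
    charpoly_mul_comm' (weightedBdryMatrix S a k) (cobdryMatrix R S k)

theorem charpoly_downLaplacian_mul_charpoly_upLaplacian :
    (downLaplacian S a k).charpoly * (upLaplacian S a (k + 1)).charpoly =
      (Polynomial.X * (Polynomial.X - Polynomial.C (∑ x ∈ S, a x))) ^ (#S).choose (k + 1) := by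
  rw [charpoly_mul_charpoly_of_mul_eq_zero_of_add_eq_smul_one
    (downLaplacian_mul_upLaplacian S a k) (downLaplacian_add_upLaplacian S a k),
    Fintype.card_coe, card_powersetCard]

theorem charpoly_upLaplacian_zero :
    (upLaplacian S a 0).charpoly = Polynomial.X - Polynomial.C (∑ x ∈ S, a x) := by
  have hunique : Unique (S.powersetCard 0) :=
    ⟨⟨⟨∅, by simp⟩⟩, by rintro ⟨σ, hσ⟩; simpa using hσ⟩
  have hempty : ((default : S.powersetCard 0) : Finset α) = ∅ := by
    simpa using (default : S.powersetCard 0).2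
  have hentry : upLaplacian S a 0 default default = ∑ x ∈ S, a x := by
    rw [upLaplacian_apply, hempty]
    simp [weightedBdry, weightedCobdry, faceSign, filter_singleton]
  rw [charpoly, det_unique, charmatrix_apply_eq, hentry]

variable {S a k} in
theorem charpoly_upLaplacian_succ_of_charpoly_downLaplacian {M : ℕ} (hS : #S = M + 1)
    (hdown : (downLaplacian S a k).charpoly = Polynomial.X ^ M.choose (k + 1) *
      (Polynomial.X - Polynomial.C (∑ x ∈ S, a x)) ^ M.choose k) :
    (upLaplacian S a (k + 1)).charpoly = Polynomial.X ^ M.choose k *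
      (Polynomial.X - Polynomial.C (∑ x ∈ S, a x)) ^ M.choose (k + 1) := by
  have hprod := charpoly_downLaplacian_mul_charpoly_upLaplacian S a k
  rw [hS, Nat.choose_succ_succ'] at hprod
  refine (downLaplacian S a k).charpoly_monic.isRegular.left ?_
  beta_reduce
  rw [hprod, hdown, mul_pow]
  ring

variable {S} in
theorem charpoly_downLaplacian {M : ℕ} (hS : #S = M + 1) :
    (downLaplacian S a k).charpoly = Polynomial.X ^ M.choose (k + 1) *
      (Polynomial.X - Polynomial.C (∑ x ∈ S, a x)) ^ M.choose k := by
  induction k with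
  | zero =>
    refine (Polynomial.monic_X_pow ((#S).choose 0)).isRegular.left ?_
    beta_reduce
    rw [← X_pow_mul_charpoly_upLaplacian, charpoly_upLaplacian_zero, hS,
      Nat.choose_succ_succ']
    simp only [Nat.choose_zero_right]
    ring
  | succ k ih =>
    refine (Polynomial.monic_X_pow ((#S).choose (k + 1))).isRegular.left ?_
    beta_reduce
    rw [← X_pow_mul_charpoly_upLaplacian,
      charpoly_upLaplacian_succ_of_charpoly_downLaplacian hS ih, hS, Nat.choose_succ_succ',
      Nat.choose_succ_succ']
    ring

theorem upLaplacian_neg : upLaplacian S (-a) k = -upLaplacian S a k := by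
  ext σ σ'
  rw [Matrix.neg_apply, upLaplacian_apply, upLaplacian_apply]
  simp [weightedBdry]

variable {S} in
theorem det_smul_one_add_upLaplacian_succ {M : ℕ} (hS : #S = M + 1) (y : R) :
    (y • 1 + upLaplacian S a (k + 1)).det =
      y ^ M.choose k * (y + ∑ x ∈ S, a x) ^ M.choose (k + 1) := by
  have h := congrArg (Polynomial.eval y) <| charpoly_upLaplacian_succ_of_charpoly_downLaplacian hS
    (charpoly_downLaplacian (-a) k hS)
  rw [eval_charpoly, upLaplacian_neg, sub_neg_eq_add, scalar_apply, ← smul_one_eq_diagonal] at h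
  simpa [Polynomial.eval_finsetSum] using h

end Koszul

section PowersetCard

open Finset

variable {α R : Type*}

theorem notMem_of_mem_powersetCard_erase [DecidableEq α] {S σ : Finset α} {v : α} {k : ℕ}
    (hσ : σ ∈ (S.erase v).powersetCard k) : v ∉ σ :=
  fun hv => notMem_erase v S ((mem_powersetCard.1 hσ).1 hv)

theorem prod_powersetCard_succ_prod [CommMonoid R] {S : Finset α} {M : ℕ}
    (hS : #S = M + 1) (x : α → R) (k : ℕ) :
    ∏ σ ∈ S.powersetCard (k + 1), ∏ i ∈ σ, x i = (∏ i ∈ S, x i) ^ M.choose k := by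
  classical
  have hprod : ∀ σ ∈ S.powersetCard (k + 1), ∏ i ∈ σ, x i = ∏ i ∈ S, if i ∈ σ then x i else 1 :=
    fun σ hσ => by rw [prod_ite_mem, inter_eq_right.2 (mem_powersetCard.1 hσ).1]
  have hcount : ∀ i ∈ S, #{σ ∈ S.powersetCard (k + 1) | i ∈ σ} = M.choose k := fun i hi => by
    simpa [hS, hi] using card_filter_powersetCard_subset {i} S (k + 1) (by simpa using hi) (by simp)
  rw [prod_congr rfl hprod, prod_comm, ← prod_pow]
  refine prod_congr rfl fun i hi => ?_
  rw [← prod_filter, prod_const, hcount i hi]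

end PowersetCard

section SimplexBoundary

open Finset

variable {n k : ℕ} {R : Type*} [CommRing R]

theorem intCast_simplexBdry (σ : {σ : Finset (Fin n) // #σ = k})
    (τ : {τ : Finset (Fin n) // #τ = k + 1}) :
    (simplexBdry n k σ τ : R) = weightedCobdry 1 (Pi.single σ.1 1) τ.1 := by
  simp [simplexBdry, weightedCobdry, faceSign, Pi.single_apply, eq_comm]

theorem sum_intCast_simplexBdry_mul (σ : {σ : Finset (Fin n) // #σ = k})
    (g : Finset (Fin n) → R) :
    ∑ τ, (simplexBdry n k σ τ : R) * g τ.1 = weightedBdry univ 1 g σ.1 := by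
  have hσ : σ.1 ∈ univ.powersetCard k := mem_powersetCard.2 ⟨subset_univ _, σ.2⟩
  rw [← sum_weightedBdry_single_one_mul hσ, sum_subtype (p := fun τ => #τ = k + 1) _ (by simp)]
  refine sum_congr rfl fun τ _ => ?_
  rw [intCast_simplexBdry, weightedCobdry_single_one (subset_univ _)]

theorem simplexBdry_mulVec (g : Finset (Fin n) → ℤ) (σ : {σ : Finset (Fin n) // #σ = k}) :
    (simplexBdry n k *ᵥ fun τ => g τ.1) σ = weightedBdry univ 1 g σ.1 := by
  rw [← sum_intCast_simplexBdry_mul]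
  rfl

theorem simplexBdry_mulVec_col (τ : {τ : Finset (Fin n) // #τ = k + 1 + 1}) :
    simplexBdry n k *ᵥ (simplexBdry n (k + 1))ᵀ τ = 0 := by
  have hcol : (simplexBdry n (k + 1))ᵀ τ =
      fun σ => weightedBdry univ 1 (Pi.single τ.1 (1 : ℤ)) σ.1 := by
    funext σ
    rw [← weightedCobdry_single_one (subset_univ _), ← intCast_simplexBdry, Int.cast_id,
      transpose_apply]
  funext ρ
  rw [hcol, simplexBdry_mulVec, weightedBdry_weightedBdry, Pi.zero_apply]

/-- A `k`-subset of `S`, viewed as an index of the simplicial boundary matrices. -/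
def toFace (S : Finset (Fin n)) (k : ℕ) (σ : S.powersetCard k) :
    {σ : Finset (Fin n) // #σ = k} :=
  ⟨σ, (mem_powersetCard.1 σ.2).2⟩

/-- The reduced boundary matrix: only the rows indexed by the faces avoiding `v` are kept. -/
def reducedBdry (v : Fin n) (k : ℕ) :
    Matrix ((univ.erase v).powersetCard k) {τ : Finset (Fin n) // #τ = k + 1} ℤ :=
  (simplexBdry n k).submatrix (toFace (univ.erase v) k) id

end SimplexBoundary

section ReducedLaplacian

open Finset

variable {n : ℕ} {R : Type*} [CommRing R]

/-- The weighted Laplacian `∂ W ∂ᵀ` restricted to the faces avoiding `v`, where `W` is the diagonal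
matrix of the monomials `∏ i ∈ τ, x i`. -/
def reducedLaplacian (v : Fin n) (x : Fin n → R) (k : ℕ) :
    Matrix ((univ.erase v).powersetCard k) ((univ.erase v).powersetCard k) R :=
  (reducedBdry v k).map (Int.castRingHom R) *
    diagonal (fun τ : {τ : Finset (Fin n) // #τ = k + 1} => ∏ i ∈ τ.1, x i) *
    ((reducedBdry v k).map (Int.castRingHom R))ᵀ

theorem reducedLaplacian_eq_diagonal_mul (v : Fin n) (x : Fin n → R) (k : ℕ) :
    reducedLaplacian v x k = diagonal (fun σ => ∏ i ∈ σ.1, x i) *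
      (x v • 1 + upLaplacian (univ.erase v) x k) := by
  ext σ σ'
  have hσ := notMem_of_mem_powersetCard_erase σ.2
  have hσ' : ∀ ρ, v ∈ ρ → (Pi.single σ'.1 1 : Finset (Fin n) → R) ρ = 0 := fun ρ hρ =>
    Pi.single_eq_of_ne (by rintro rfl; exact notMem_of_mem_powersetCard_erase σ'.2 hρ) 1
  calc reducedLaplacian v x k σ σ'
    _ = ∑ τ, (simplexBdry n k (toFace _ k σ) τ : R) *
          ((∏ i ∈ τ.1, x i) * weightedCobdry 1 (Pi.single σ'.1 1) τ.1) := by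
        rw [reducedLaplacian, Matrix.mul_apply]
        simp [mul_diagonal, reducedBdry, intCast_simplexBdry, toFace, mul_assoc]
    _ = (∏ i ∈ σ.1, x i) * weightedBdry univ x (weightedCobdry 1 (Pi.single σ'.1 1)) σ.1 := by
        rw [sum_intCast_simplexBdry_mul (toFace _ k σ)
          fun τ => (∏ i ∈ τ, x i) * weightedCobdry 1 (Pi.single σ'.1 1) τ,
          weightedBdry_one_prod_mul]
        rfl
    _ = _ := by
        rw [weightedBdry_univ_weightedCobdry_one hσ x hσ', diagonal_mul, Matrix.add_apply,
          upLaplacian_apply]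
        simp [Matrix.one_apply, Pi.single_apply]

theorem det_reducedLaplacian_succ (hn : 2 ≤ n) (v : Fin n) (x : Fin n → R) (e : ℕ) :
    (reducedLaplacian v x (e + 1)).det =
      (∏ i, x i) ^ (n - 2).choose e * (∑ i, x i) ^ (n - 2).choose (e + 1) := by
  have hS : #(univ.erase v) = n - 2 + 1 := by
    rw [card_erase_of_mem (mem_univ v), card_univ, Fintype.card_fin]
    omega
  rw [reducedLaplacian_eq_diagonal_mul, det_mul, det_diagonal,
    prod_coe_sort _ fun σ : Finset (Fin n) => ∏ i ∈ σ, x i, prod_powersetCard_succ_prod hS,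
    det_smul_one_add_upLaplacian_succ x e hS, add_sum_erase _ _ (mem_univ v), ← mul_assoc,
    ← mul_pow, prod_erase_mul _ _ (mem_univ v)]

end ReducedLaplacian

section Cone

open Finset

variable {α R : Type*} [LinearOrder α] [CommRing R]

theorem weightedCobdry_single_apply (v : α)
    (f : Finset α → R) (τ : Finset α) :
    weightedCobdry (Pi.single v 1) f τ = if v ∈ τ then faceSign v τ * f (τ.erase v) else 0 := by
  simp [weightedCobdry, Pi.single_apply]

variable [Fintype α]

theorem weightedBdry_cone_add_cone_weightedBdry (v : α) (f : Finset α → R) (σ : Finset α) :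
    weightedBdry univ 1 (weightedCobdry (Pi.single v 1) f) σ +
      weightedCobdry (Pi.single v 1) (weightedBdry univ 1 f) σ = f σ := by
  rw [weightedBdry_weightedCobdry_add (subset_univ σ)]
  simp

/-- The cone over `g` at `v` vanishes, so `g` is the cone over its own boundary. -/
theorem eq_zero_of_weightedBdry_eq_zero (v : α) {g : Finset α → R} {k : ℕ}
    (hbdry : ∀ ρ, #ρ = k → weightedBdry univ 1 g ρ = 0)
    (havoid : ∀ τ, #τ = k + 1 → v ∉ τ → g τ = 0) {σ : Finset α} (hσ : #σ = k + 1) : g σ = 0 := by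
  have hcone : ∀ x ∈ univ \ σ, weightedCobdry (Pi.single v 1) g (insert x σ) = 0 := by
    intro x hx
    rw [weightedCobdry_single_apply, ite_eq_right_iff]
    intro hv
    rw [havoid _ _ (notMem_erase v _), mul_zero]
    rw [card_erase_of_mem hv, card_insert_of_notMem (mem_sdiff.1 hx).2, hσ, Nat.add_sub_cancel]
  have hcone_bdry : weightedCobdry (Pi.single v 1) (weightedBdry univ 1 g) σ = 0 := by
    rw [weightedCobdry_single_apply, ite_eq_right_iff]
    intro hv
    rw [hbdry _ (by rw [card_erase_of_mem hv, hσ, Nat.add_sub_cancel]), mul_zero]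
  rw [← weightedBdry_cone_add_cone_weightedBdry v g σ, hcone_bdry, weightedBdry, add_zero]
  exact sum_eq_zero fun x hx => by rw [hcone x hx, mul_zero]

end Cone

section Homology

open Finset

variable {n : ℕ}

/-- Restriction of the integral cycles on the `(k + 1)`-subsets to the faces avoiding `v`. -/
def cycleRestrict (v : Fin n) (k : ℕ) :
    LinearMap.ker (simplexBdry n k).mulVecLin →ₗ[ℤ] ((univ.erase v).powersetCard (k + 1) → ℤ) :=
  LinearMap.funLeft ℤ ℤ (toFace (univ.erase v) (k + 1)) ∘ₗ Submodule.subtype _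

theorem cycleRestrict_injective (v : Fin n) (k : ℕ) : Function.Injective (cycleRestrict v k) := by
  rw [injective_iff_map_eq_zero]
  rintro ⟨f, hf⟩ hres
  ext σ
  let g : Finset (Fin n) → ℤ := Function.extend Subtype.val f 0
  have hg : ∀ τ : {τ : Finset (Fin n) // #τ = k + 1}, g τ.1 = f τ :=
    fun τ => Subtype.val_injective.extend_apply f 0 τ
  have hbdry : ∀ ρ, #ρ = k → weightedBdry univ 1 g ρ = 0 := fun ρ hρ => by
    rw [← simplexBdry_mulVec g ⟨ρ, hρ⟩, funext hg]
    exact congrFun (LinearMap.mem_ker.1 hf) ⟨ρ, hρ⟩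
  have havoid : ∀ τ, #τ = k + 1 → v ∉ τ → g τ = 0 := fun τ hτ hv => by
    have hmem : τ ∈ (univ.erase v).powersetCard (k + 1) :=
      mem_powersetCard.2 ⟨subset_erase.2 ⟨subset_univ τ, hv⟩, hτ⟩
    exact (hg ⟨τ, hτ⟩).trans (congrFun hres ⟨τ, hmem⟩)
  refine (hg σ).symm.trans ?_
  exact eq_zero_of_weightedBdry_eq_zero v hbdry havoid σ.2

theorem cycleRestrict_surjective (v : Fin n) (k : ℕ) :
    Function.Surjective (cycleRestrict v k) := by
  intro f
  let g : Finset (Fin n) → ℤ := Function.extend Subtype.val f 0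
  let c := weightedBdry univ 1 (weightedCobdry (Pi.single v 1) g)
  have hcycle : (fun τ => c τ.1) ∈ LinearMap.ker (simplexBdry n k).mulVecLin := by
    rw [LinearMap.mem_ker, mulVecLin_apply]
    funext ρ
    rw [simplexBdry_mulVec, weightedBdry_weightedBdry, Pi.zero_apply]
  refine ⟨⟨_, hcycle⟩, funext fun σ => ?_⟩
  have hhomotopy := weightedBdry_cone_add_cone_weightedBdry v g σ
  rw [weightedCobdry_single_apply, if_neg (notMem_of_mem_powersetCard_erase σ.2), add_zero]
    at hhomotopy
  exact hhomotopy.trans (Subtype.val_injective.extend_apply f 0 σ)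

/-- Coning at `v` shows that a cycle is determined by its values on the faces avoiding `v`, and that
these can be prescribed freely. -/
noncomputable def cycleEquiv (v : Fin n) (k : ℕ) :
    LinearMap.ker (simplexBdry n k).mulVecLin ≃ₗ[ℤ] ((univ.erase v).powersetCard (k + 1) → ℤ) :=
  LinearEquiv.ofBijective (cycleRestrict v k)
    ⟨cycleRestrict_injective v k, cycleRestrict_surjective v k⟩

/-- The column of `∂_{k+1}` indexed by `τ`, as a cycle. -/
def bdryCycle {k : ℕ} (τ : {τ : Finset (Fin n) // #τ = k + 1 + 1}) :
    LinearMap.ker (simplexBdry n k).mulVecLin :=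
  ⟨(simplexBdry n (k + 1))ᵀ τ, simplexBdry_mulVec_col τ⟩

theorem cycleEquiv_bdryCycle (v : Fin n) {k : ℕ} (τ : {τ : Finset (Fin n) // #τ = k + 1 + 1}) :
    cycleEquiv v k (bdryCycle τ) = (reducedBdry v (k + 1)).col τ :=
  rfl

theorem comap_subtype_span_simplexBdry_cols {k : ℕ}
    (T : Set {τ : Finset (Fin n) // #τ = k + 1 + 1}) :
    Submodule.comap (LinearMap.ker (simplexBdry n k).mulVecLin).subtype
        (Submodule.span ℤ ((fun τ => (simplexBdry n (k + 1))ᵀ τ) '' T)) =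
      Submodule.span ℤ (bdryCycle '' T) := by
  have himage : (fun τ => (simplexBdry n (k + 1))ᵀ τ) '' T =
      (LinearMap.ker (simplexBdry n k).mulVecLin).subtype '' (bdryCycle '' T) := by
    rw [Set.image_image]
    rfl
  rw [himage, ← Submodule.map_span,
    Submodule.comap_map_eq_of_injective (Submodule.subtype_injective _)]

variable {e : ℕ} {v : Fin n} {T : Finset {τ : Finset (Fin n) // #τ = e + 1 + 1}}
  (E : (univ.erase v).powersetCard (e + 1) ≃ T)

/-- The square submatrix of the reduced boundary matrix on the columns in `T`, enumerated by `E`. -/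
def reducedMinor : Matrix ((univ.erase v).powersetCard (e + 1))
    ((univ.erase v).powersetCard (e + 1)) ℤ :=
  (reducedBdry v (e + 1)).submatrix id fun i => (E i).1

theorem linearIndependent_simplexBdry_cols_iff :
    LinearIndependent ℚ (fun τ : T => fun σ => ((simplexBdry n (e + 1) σ τ.1 : ℤ) : ℚ)) ↔
      (reducedMinor E).det ≠ 0 := by
  have hcycle : LinearIndependent ℤ (fun τ : T => (simplexBdry n (e + 1))ᵀ τ.1) ↔
      LinearIndependent ℤ fun τ : T => bdryCycle τ.1 :=
    (LinearMap.ker (simplexBdry n e).mulVecLin).subtype.linearIndependent_iff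
      (v := fun τ : T => bdryCycle τ.1) (Submodule.ker_subtype _)
  have hcol : (cycleEquiv v e).toLinearMap ∘ (fun τ : T => bdryCycle τ.1) ∘ E =
      (reducedMinor E).col :=
    funext fun i => cycleEquiv_bdryCycle v (E i).1
  have hreduced : LinearIndependent ℤ (fun τ : T => bdryCycle τ.1) ↔
      LinearIndependent ℤ (reducedMinor E).col := by
    rw [← hcol, LinearMap.linearIndependent_iff _ (cycleEquiv v e).ker, linearIndependent_equiv E]
  exact (linearIndependent_intCast_iff fun (τ : T) σ => simplexBdry n (e + 1) σ τ.1).trans <|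
    hcycle.trans <| hreduced.trans <|
      linearIndependent_col_iff.trans nonsingular_iff_det_ne_zero

theorem card_powersetCard_univ_erase (v : Fin n) (k : ℕ) :
    Fintype.card ((univ.erase v).powersetCard k) = (n - 1).choose k := by
  rw [Fintype.card_coe, card_powersetCard, card_erase_of_mem (mem_univ v), card_univ,
    Fintype.card_fin]

theorem isSST_iff_det_reducedMinor_ne_zero : IsSST n e T ↔ (reducedMinor E).det ≠ 0 := by
  have hcard : #T = (n - 1).choose (e + 1) := by
    rw [← Fintype.card_coe T, ← Fintype.card_congr E, card_powersetCard_univ_erase]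
  rw [IsSST, linearIndependent_simplexBdry_cols_iff E, and_iff_right hcard]

theorem card_kalaiH_eq_natAbs_det_reducedMinor (hdet : (reducedMinor E).det ≠ 0) :
    Nat.card (KalaiH n e T) = (reducedMinor E).det.natAbs := by
  rw [← card_quotient_range_mulVecLin _ hdet]
  refine Nat.card_congr (Submodule.Quotient.equiv _ _ (cycleEquiv v e) ?_).toEquiv
  rw [comap_subtype_span_simplexBdry_cols, Submodule.map_span, Set.image_image, range_mulVecLin]
  have hrange : Set.range (reducedMinor E).col = (fun τ => (reducedBdry v (e + 1)).col τ) '' T := by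
    rw [Set.image_eq_range]
    exact E.surjective.range_comp fun τ : T => (reducedBdry v (e + 1)).col τ.1
  rw [hrange]
  rfl

variable {R : Type*} [CommRing R]

theorem det_submatrix_reducedBdry_mul (x : Fin n → R) :
    (((reducedBdry v (e + 1)).map (Int.castRingHom R) *
          diagonal (fun τ : {τ : Finset (Fin n) // #τ = e + 1 + 1} => ∏ i ∈ τ.1, x i)).submatrix
        id (Subtype.val : T → _) *
      ((reducedBdry v (e + 1)).map (Int.castRingHom R))ᵀ.submatrix (Subtype.val : T → _) id).det =
      ((reducedMinor E).det.natAbs ^ 2 : ℕ) * ∏ τ ∈ T, ∏ i ∈ τ.1, x i := by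
  have hcast : (((reducedMinor E).det.natAbs ^ 2 : ℕ) : R) = ((reducedMinor E).det : R) ^ 2 := by
    rw [← Int.cast_natCast, Nat.cast_pow, Int.natCast_natAbs, sq_abs, Int.cast_pow]
  have hdet : (((reducedBdry v (e + 1)).map (Int.castRingHom R)).submatrix id
      fun i => (E i).1).det = ((reducedMinor E).det : R) :=
    ((Int.castRingHom R).map_det (reducedMinor E)).symm
  rw [det_submatrix_mul_diagonal_mul_transpose _ _ E, hdet, hcast]

theorem finsum_isSST_eq_det_reducedLaplacian (v : Fin n) (x : Fin n → R) (e : ℕ) :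
    ∑ᶠ T ∈ {T | IsSST n e T},
        ((Nat.card (KalaiH n e T) ^ 2 : ℕ) : R) * ∏ τ ∈ T, ∏ i ∈ τ.1, x i =
      (reducedLaplacian v x (e + 1)).det := by
  rw [reducedLaplacian, det_mul_eq_sum_powersetCard, card_powersetCard_univ_erase,
    finsum_mem_eq_finite_toFinset_sum _ (Set.toFinite _)]
  have hequiv : ∀ T : Finset {τ : Finset (Fin n) // #τ = e + 1 + 1},
      #T = (n - 1).choose (e + 1) → Nonempty ((univ.erase v).powersetCard (e + 1) ≃ T) :=
    fun T hT => Fintype.card_eq.1 <| by rw [card_powersetCard_univ_erase, Fintype.card_coe, hT]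
  refine sum_subset_zero_on_sdiff (fun T hT => ?_) (fun T hT => ?_) fun T hT => ?_
  · have hSST : IsSST n e T := by simpa using hT
    exact mem_powersetCard.2 ⟨subset_univ T, hSST.1⟩
  · obtain ⟨hcard, hnot⟩ := mem_sdiff.1 hT
    obtain ⟨E⟩ := hequiv T (mem_powersetCard.1 hcard).2
    have hdet : (reducedMinor E).det = 0 := by
      simpa [isSST_iff_det_reducedMinor_ne_zero E] using hnot
    rw [det_submatrix_reducedBdry_mul E, hdet]
    simp
  · have hSST : IsSST n e T := by simpa using hT
    obtain ⟨E⟩ := hequiv T hSST.1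
    rw [det_submatrix_reducedBdry_mul E, card_kalaiH_eq_natAbs_det_reducedMinor E
      ((isSST_iff_det_reducedMinor_ne_zero E).1 hSST)]

theorem kalai_weighted_formula_general (hn : 2 ≤ n) (x : Fin n → R) (e : ℕ) :
    ∑ᶠ T ∈ {T | IsSST n e T},
        ((Nat.card (KalaiH n e T) ^ 2 : ℕ) : R) * ∏ τ ∈ T, ∏ i ∈ τ.1, x i =
      (∏ i, x i) ^ (n - 2).choose e * (∑ i, x i) ^ (n - 2).choose (e + 1) := by
  rw [finsum_isSST_eq_det_reducedLaplacian ⟨0, by omega⟩, det_reducedLaplacian_succ hn]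

end Homology

/-- **Kalai's weighted formula.**  For `2 ≤ n` and `1 ≤ d ≤ n - 1` (here `d = e + 1`),
in `ℤ[x_1,…,x_n]`:
`∑_T |H(T)|² ∏_{τ ∈ T} ∏_{i ∈ τ} x_i = (x_1 ⋯ x_n)^C(n-2,d-1) · (x_1 + ⋯ + x_n)^C(n-2,d)`. -/
theorem kalai_weighted_formula (n e : ℕ) (hn : 2 ≤ n) (hd : e + 1 ≤ n - 1) :
    (∑ᶠ T ∈ {T | IsSST n e T},
        ((Nat.card (KalaiH n e T) ^ 2 : ℕ) : MvPolynomial (Fin n) ℤ) *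
          ∏ τ ∈ T, ∏ i ∈ τ.1, X i) =
      (∏ i : Fin n, (X i : MvPolynomial (Fin n) ℤ)) ^ Nat.choose (n - 2) e *
        (∑ i : Fin n, X i) ^ Nat.choose (n - 2) (e + 1) :=
  kalai_weighted_formula_general hn X e
end
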